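/- Let k be a field of characteristic 0 and B a ℤ-graded normal affine k-domain. Then: (a) NR(B) = ⋃_{d ∈ M(B)} { d, 2d, 3d, … }; (b) every element d of M(B) divides ē(B) and satisfies d ⊘ e(B) = d. -/

import Mathlib

noncomputable section

/-- A derivation is locally nilpotent. -/
def IsLND {R : Type*} [CommRing R] (D : Derivation ℤ R R) : Prop :=
  ∀ b : R, ∃ n : ℕ, 0 < n ∧ (⇑D)^[n] b = 0

/-- Kernel of a derivation, as a subring. -/
def kerDer {R : Type*} [CommRing R] (D : Derivation ℤ R R) : Subring R where
  carrier := {x | D x = 0}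
  one_mem' := by simp
  mul_mem' := by
    intro a b ha hb
    simp only [Set.mem_setOf_eq] at *
    rw [Derivation.leibniz, ha, hb]
    simp
  add_mem' := by
    intro a b ha hb
    simp only [Set.mem_setOf_eq] at *
    rw [map_add, ha, hb, add_zero]
  zero_mem' := by simp
  neg_mem' := by
    intro a ha
    simp only [Set.mem_setOf_eq] at *
    rw [map_neg, ha, neg_zero]

section Graded

variable {G : Type*} [AddCommGroup G] {B : Type*} [CommRing B]

/-- The Veronese subring `B^{(H)} = ⊕_{i ∈ H} B_i` of a `G`-graded ring,
realized as the subring generated by the homogeneous elements whose degree lies in `H`. -/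
def verSub (𝒜 : G → AddSubgroup B) (H : AddSubgroup G) : Subring B :=
  Subring.closure (⋃ i ∈ (H : Set G), (𝒜 i : Set B))

/-- 𝔾(B): the subgroup of G generated by the degrees of nonzero homogeneous elements. -/
def Gsub (𝒜 : G → AddSubgroup B) : AddSubgroup G :=
  AddSubgroup.closure { i : G | 𝒜 i ≠ ⊥ }

/-- `H ∈ 𝕋(B)`: the quotient `𝔾(B)/(H ∩ 𝔾(B))` is torsion. -/
def Tmem (𝒜 : G → AddSubgroup B) (H : AddSubgroup G) : Prop :=
  ∀ g ∈ Gsub 𝒜, ∃ n : ℕ, 0 < n ∧ n • g ∈ H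

/-- A homogeneous derivation of `B`. -/
def IsHomogDer (𝒜 : G → AddSubgroup B) (D : Derivation ℤ B B) : Prop :=
  ∃ d : G, ∀ (i : G) (x : B), x ∈ 𝒜 i → D x ∈ 𝒜 (i + d)

/-- A homogeneous derivation of a graded subring `S` of `B`. -/
def IsHomogDerOn (𝒜 : G → AddSubgroup B) (S : Subring B) (D : Derivation ℤ S S) : Prop :=
  ∃ d : G, ∀ (i : G) (x : S), (x : B) ∈ 𝒜 i → ((D x : S) : B) ∈ 𝒜 (i + d)

/-- 𝕄̄(B,p): the subgroup of G generated by the degrees i with B_i ⊄ p. -/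
def Mbar (𝒜 : G → AddSubgroup B) (p : Ideal B) : AddSubgroup G :=
  AddSubgroup.closure { i : G | ¬ (𝒜 i : Set B) ⊆ (p : Set B) }

/-- A prime ideal of height 1. -/
def heightOne {R : Type*} [CommRing R] (p : Ideal R) : Prop :=
  p.IsPrime ∧ (∃ q : Ideal R, q.IsPrime ∧ q < p) ∧
    ∀ q r : Ideal R, q.IsPrime → r.IsPrime → q < r → r < p → False

open Classical in
/-- 𝔾̄(B). -/
def Gbar (𝒜 : G → AddSubgroup B) : AddSubgroup G :=
  if ∃ p : Ideal B, heightOne p then ⨅ p : {p : Ideal B // heightOne p}, Mbar 𝒜 p.1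
  else Gsub 𝒜

end Graded

/-- The nonnegative generator of a subgroup of ℤ (so that the gcd of a set of integers
is `groupGen` of the subgroup it generates, and the lcm of a set of integers is
`groupGen` of the intersection of the subgroups the elements generate). -/
noncomputable def groupGen (H : AddSubgroup ℤ) : ℕ :=
  (Submodule.IsPrincipal.generator (AddSubgroup.toIntSubmodule H : Ideal ℤ)).natAbs

section ZGraded

variable {B : Type*} [CommRing B]

/-- The set of height-1 homogeneous prime ideals of a ℤ-graded ring. -/
def homogHt1 (𝒜 : ℤ → AddSubgroup B) : Set (Ideal B) :=
  { p | heightOne p ∧ p = Ideal.span { x : B | x ∈ p ∧ ∃ i : ℤ, x ∈ 𝒜 i } }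

/-- The saturation index e(B) = gcd{ n : B_n ≠ 0 } of a ℤ-graded ring. -/
noncomputable def eB (𝒜 : ℤ → AddSubgroup B) : ℕ :=
  groupGen (Gsub 𝒜)

open Classical in
/-- The codimension-1 saturation index ē(B) = lcm{ e(B/p) : p ∈ Z } (Z the set of
height-1 homogeneous primes) if Z ≠ ∅, and ē(B) = e(B) if Z = ∅.  Here e(B/p) is the
gcd of { n : (B/p)_n ≠ 0 } = { n : B_n ⊄ p }, so that e(B/p)ℤ = 𝕄̄(B,p) and the lcm
corresponds to the intersection of the subgroups 𝕄̄(B,p). -/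
noncomputable def ebarB (𝒜 : ℤ → AddSubgroup B) : ℕ :=
  if (homogHt1 𝒜).Nonempty then groupGen (⨅ p : homogHt1 𝒜, Mbar 𝒜 p.1) else eB 𝒜

end ZGraded


section ZGraded2

variable {B : Type*} [CommRing B]

/-- The d-th Veronese subring B^{(d)} of a ℤ-graded ring. -/
def verZ (𝒜 : ℤ → AddSubgroup B) (d : ℕ) : Subring B :=
  verSub 𝒜 (AddSubgroup.zmultiples (d : ℤ))

/-- NR(B): the set of d ≥ 1 such that B^{(d)} is non-rigid. -/
def NRset (𝒜 : ℤ → AddSubgroup B) : Set ℕ :=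
  { d | 1 ≤ d ∧ ∃ D : Derivation ℤ (verZ 𝒜 d) (verZ 𝒜 d), IsLND D ∧ D ≠ 0 }

/-- M(B): the maximal elements of NR(B) for the order d₁ ≼ d₂ ⟺ d₂ ∣ d₁. -/
def MsetZ (𝒜 : ℤ → AddSubgroup B) : Set ℕ :=
  { d | d ∈ NRset 𝒜 ∧ ∀ e ∈ NRset 𝒜, e ∣ d → e = d }

end ZGraded2

/-- m ⊘ n = ∏_{p prime, v_p(m) > v_p(n)} p^{v_p(m)}, with v_p(0) = ∞ (so m ⊘ 0 = 1). -/
def odiv (m n : ℕ) : ℕ :=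
  if n = 0 then 1
  else ∏ p ∈ m.primeFactors,
    if n.factorization p < m.factorization p then p ^ m.factorization p else 1

/-! A nonzero locally nilpotent derivation of a finitely generated graded domain has a nonzero
homogeneous top-degree component, which is again locally nilpotent, so only homogeneous derivations
matter.

Going down: a homogeneous `D` on `B^{(H)}` need not preserve `B^{(H')}` for `H' ≤ H` of finite
exponent, but for a homogeneous `s` with `D s ≠ 0 = D (D s)` and suitable homogeneous `g ∈ ker D`
and `m`, the derivation `(g / s ^ (m - 1)) D` does, and it is still locally nilpotent. Hence `NR(B)`
is closed under multiples, which gives (a).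

Going up: a homogeneous `D` on `B^{(d)}` extends to the fraction field of `B`, which is algebraic
over that of `B^{(d)}`. For normal `B` the extension has no poles along the height-one primes on
`B^{(gcd(d, ē(B)))}`, because each homogeneous height-one prime misses elements of enough degrees.
Hence `gcd(d, ē(B))` lies in `NR(B)` with `d`. Since `B^{(d)}` depends only on `lcm(d, e(B))`, so
does `d ⊘ e(B)`. For `d` in `M(B)` both must therefore equal `d`, which is (b). -/

section Veronese

variable {G B : Type*} [AddCommGroup G] [CommRing B] {𝒜 : G → AddSubgroup B} {H : AddSubgroup G}

lemma mem_verSub_of_mem {i : G} (hi : i ∈ H) {x : B} (hx : x ∈ 𝒜 i) : x ∈ verSub 𝒜 H :=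
  Subring.subset_closure (Set.mem_biUnion hi hx)

lemma verSub_mono {H' : AddSubgroup G} (h : H ≤ H') : verSub 𝒜 H ≤ verSub 𝒜 H' :=
  Subring.closure_mono (Set.biUnion_subset_biUnion_left h)

lemma verSub_inf_Gsub : verSub 𝒜 (H ⊓ Gsub 𝒜) = verSub 𝒜 H := by
  refine le_antisymm (verSub_mono inf_le_left) ?_
  refine Subring.closure_le.mpr (Set.iUnion₂_subset fun i hi x hx => ?_)
  rcases eq_or_ne (𝒜 i) ⊥ with h | h
  · rw [h, SetLike.mem_coe, AddSubgroup.mem_bot] at hx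
    rw [hx]
    exact zero_mem _
  · exact mem_verSub_of_mem (AddSubgroup.mem_inf.mpr ⟨hi, AddSubgroup.subset_closure h⟩) hx

variable [DecidableEq G] [GradedRing 𝒜]

lemma mem_verSub_iff {x : B} : x ∈ verSub 𝒜 H ↔ ∀ i ∉ H, GradedRing.proj 𝒜 i x = 0 := by
  classical
  refine ⟨fun hx => ?_, fun hx => ?_⟩
  · induction hx using Subring.closure_induction with
    | mem x hx =>
      obtain ⟨j, hj, hxj⟩ := Set.mem_iUnion₂.mp hx
      intro i hi
      exact DirectSum.decompose_of_mem_ne 𝒜 hxj fun h => hi (h ▸ hj)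
    | zero => exact fun i _ => map_zero _
    | one =>
      intro i hi
      exact DirectSum.decompose_of_mem_ne 𝒜 SetLike.GradedOne.one_mem
        fun h => hi (h ▸ H.zero_mem)
    | add x y _ _ hx hy => exact fun i hi => by rw [map_add, hx i hi, hy i hi, add_zero]
    | neg x _ hx => exact fun i hi => by rw [map_neg, hx i hi, neg_zero]
    | mul x y _ _ hx hy =>
      intro i hi
      rw [GradedRing.proj_apply, DirectSum.decompose_mul, DirectSum.coe_mul_apply]
      refine Finset.sum_eq_zero fun jl hjl => ?_
      have hsum : jl.1 + jl.2 = i := (Finset.mem_filter.mp hjl).2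
      by_cases hj : jl.1 ∈ H
      · have hl : jl.2 ∉ H := fun hl => hi (hsum ▸ H.add_mem hj hl)
        exact mul_eq_zero_of_right _ (hy _ hl)
      · exact mul_eq_zero_of_left (hx _ hj) _
  · rw [← DirectSum.sum_support_decompose 𝒜 x]
    refine sum_mem fun i hi => ?_
    by_cases hiH : i ∈ H
    · exact mem_verSub_of_mem hiH (SetLike.coe_mem _)
    · exact absurd (hx i hiH) (by simpa using hi)

lemma mem_of_mem_verSub {i : G} {x : B} (hx : x ∈ verSub 𝒜 H) (hxi : x ∈ 𝒜 i) (h0 : x ≠ 0) :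
    i ∈ H := by
  by_contra hi
  exact h0 <| (DirectSum.decompose_of_mem_same 𝒜 hxi).symm.trans (mem_verSub_iff.mp hx i hi)

variable (𝒜 H) in
/-- The grading of the Veronese subring `B^{(H)}` induced by that of `B`; its pieces of degree
outside `H` vanish. -/
def verGrading (i : G) : AddSubgroup (verSub 𝒜 H) :=
  (𝒜 i).comap (verSub 𝒜 H).subtype.toAddMonoidHom

lemma isInternal_verGrading : DirectSum.IsInternal (verGrading 𝒜 H) := by
  classical
  let incl (i : G) : verGrading 𝒜 H i →+ 𝒜 i :=
    ((verSub 𝒜 H).subtype.toAddMonoidHom.comp (verGrading 𝒜 H i).subtype).codRestrict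
      (𝒜 i) fun x => x.2
  have hcomp : (verSub 𝒜 H).subtype.toAddMonoidHom.comp
      (DirectSum.coeAddMonoidHom (verGrading 𝒜 H)) =
        (DirectSum.coeAddMonoidHom 𝒜).comp (DirectSum.map incl) := by
    ext i x
    simp [incl]
  refine ⟨?_, fun x => ?_⟩
  · have hinj : Function.Injective
        ((DirectSum.coeAddMonoidHom 𝒜).comp (DirectSum.map incl)) :=
      (DirectSum.Decomposition.isInternal 𝒜).1.comp <| (DirectSum.map_injective incl).mpr
        fun i x y hxy => Subtype.ext (Subtype.ext (congrArg (fun z : 𝒜 i => (z : B)) hxy))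
    rw [← hcomp] at hinj
    exact Function.Injective.of_comp (f := (verSub 𝒜 H).subtype) hinj
  · have hmem (i : G) : GradedRing.proj 𝒜 i x ∈ verSub 𝒜 H := by
      by_cases hi : i ∈ H
      · exact mem_verSub_of_mem hi (SetLike.coe_mem _)
      · rw [mem_verSub_iff.mp x.2 i hi]
        exact zero_mem _
    refine ⟨∑ i ∈ (DirectSum.decompose 𝒜 (x : B)).support,
      DirectSum.of (fun i => verGrading 𝒜 H i) i ⟨⟨_, hmem i⟩,
        (DirectSum.decompose 𝒜 (x : B) i).2⟩, ?_⟩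
    apply Subtype.ext
    simp only [map_sum, DirectSum.coeAddMonoidHom_of, AddSubmonoidClass.coe_finsetSum]
    exact DirectSum.sum_support_decompose 𝒜 (x : B)

instance : GradedRing (verGrading 𝒜 H) where
  one_mem := SetLike.GradedOne.one_mem (A := 𝒜)
  mul_mem _ _ _ _ hx hy := SetLike.GradedMul.mul_mem (A := 𝒜) hx hy
  toDecomposition := isInternal_verGrading.chooseDecomposition

end Veronese

section Finiteness

variable {G B : Type*} [AddCommGroup G] [DecidableEq G] [CommRing B] {𝒜 : G → AddSubgroup B}
  [GradedRing 𝒜]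

lemma isIntegral_verSub {H : AddSubgroup G} (hH : ∀ g : G, ∃ n ≠ 0, n • g ∈ H) :
    Algebra.IsIntegral (verSub 𝒜 H) B where
  isIntegral x := by
    classical
    rw [← DirectSum.sum_support_decompose 𝒜 x]
    refine IsIntegral.sum _ fun i _ => ?_
    obtain ⟨n, hn, hni⟩ := hH i
    refine IsIntegral.of_pow hn.bot_lt ?_
    exact isIntegral_algebraMap (R := verSub 𝒜 H)
      (x := ⟨_, mem_verSub_of_mem hni (SetLike.pow_mem_graded n (SetLike.coe_mem _))⟩)

section UniqueSums

open scoped Classical in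
lemma proj_mul_of_uniqueAdd {x y : B} {i j : G}
    (hu : UniqueAdd (DirectSum.decompose 𝒜 x).support (DirectSum.decompose 𝒜 y).support i j) :
    GradedRing.proj 𝒜 (i + j) (x * y) = GradedRing.proj 𝒜 i x * GradedRing.proj 𝒜 j y := by
  rw [GradedRing.proj_apply, DirectSum.decompose_mul, DirectSum.coe_mul_apply]
  refine Finset.sum_eq_single (i, j) (fun p hp hne => ?_) (fun hij => ?_)
  · obtain ⟨hp, hsum⟩ := Finset.mem_filter.mp hp
    obtain ⟨hp1, hp2⟩ := Finset.mem_product.mp hp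
    exact absurd (Prod.ext_iff.mpr (hu hp1 hp2 hsum)) hne
  · by_contra hne
    refine hij (Finset.mem_filter.mpr ⟨Finset.mem_product.mpr ⟨?_, ?_⟩, rfl⟩)
    · exact (GradedRing.mem_support_iff 𝒜 x i).mpr (left_ne_zero_of_mul hne)
    · exact (GradedRing.mem_support_iff 𝒜 y j).mpr (right_ne_zero_of_mul hne)

variable [TwoUniqueSums G] [IsDomain B]

/-- If `x` had two components, two distinct pairs of components of `x` and `y` would contribute
uncancelled products, of different degrees, to `x * y`. -/
lemma exists_mem_of_mul_mem {x y : B} {i : G} (hxy : x * y ∈ 𝒜 i) (h0 : x * y ≠ 0) :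
    ∃ j, x ∈ 𝒜 j := by
  classical
  let X := (DirectSum.decompose 𝒜 x).support
  let Y := (DirectSum.decompose 𝒜 y).support
  have nonempty_support {z : B} (hz : z ≠ 0) : (DirectSum.decompose 𝒜 z).support.Nonempty := by
    rw [Finset.nonempty_iff_ne_empty, Ne, DFinsupp.support_eq_empty]
    exact (map_ne_zero_iff _ (DirectSum.decomposeAddEquiv 𝒜).injective).mpr hz
  have hX : X.Nonempty := nonempty_support (left_ne_zero_of_mul h0)
  have hY : Y.Nonempty := nonempty_support (right_ne_zero_of_mul h0)
  have add_eq {p : G × G} (hp : p ∈ X ×ˢ Y) (hu : UniqueAdd X Y p.1 p.2) : p.1 + p.2 = i := by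
    obtain ⟨hp1, hp2⟩ := Finset.mem_product.mp hp
    by_contra hne
    have hzero : GradedRing.proj 𝒜 (p.1 + p.2) (x * y) = 0 :=
      DirectSum.decompose_of_mem_ne 𝒜 hxy (Ne.symm hne)
    rw [proj_mul_of_uniqueAdd hu] at hzero
    exact mul_ne_zero ((GradedRing.mem_support_iff 𝒜 x _).mp hp1)
      ((GradedRing.mem_support_iff 𝒜 y _).mp hp2) hzero
  have hcard : X.card * Y.card ≤ 1 := by
    by_contra hcard
    obtain ⟨p, hp, q, hq, hpq, hup, huq⟩ :=
      TwoUniqueSums.uniqueAdd_of_one_lt_card (not_le.mp hcard)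
    obtain ⟨hq1, hq2⟩ := Finset.mem_product.mp hq
    have hsum : q.1 + q.2 = p.1 + p.2 := (add_eq hq huq).trans (add_eq hp hup).symm
    exact hpq (Prod.ext_iff.mpr (hup hq1 hq2 hsum)).symm
  have hX1 : X.card ≤ 1 := (Nat.le_mul_of_pos_right _ hY.card_pos).trans hcard
  obtain ⟨j, hj⟩ := Finset.card_eq_one.mp (hX1.antisymm hX.card_pos)
  refine ⟨j, ?_⟩
  rw [← DirectSum.sum_support_decompose 𝒜 x, show (DirectSum.decompose 𝒜 x).support = {j} from hj,
    Finset.sum_singleton]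
  exact SetLike.coe_mem _

end UniqueSums

variable (𝒜) (k : Type*) [Field k] [Algebra k B] [IsDomain B] [TwoUniqueSums G]

variable {k} in
/-- Both `c` and `c + 1` are homogeneous, being units or zero. -/
lemma algebraMap_mem_zero (c : k) : algebraMap k B c ∈ 𝒜 0 := by
  have hone : (1 : B) ∈ 𝒜 0 := SetLike.GradedOne.one_mem
  have homog (c : k) : ∃ j, algebraMap k B c ∈ 𝒜 j := by
    rcases eq_or_ne c 0 with rfl | hc
    · exact ⟨0, by simp⟩
    · refine exists_mem_of_mul_mem (y := algebraMap k B c⁻¹) (i := 0) ?_ ?_ <;>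
        simp [← map_mul, hc, hone]
  obtain ⟨j, hj⟩ := homog c
  obtain ⟨l, hl⟩ := homog (c + 1)
  rw [map_add, map_one] at hl
  by_contra hc
  have hj0 : j ≠ 0 := fun h => hc (h ▸ hj)
  have hproj {i : G} (hi : i ≠ l) := DirectSum.decompose_of_mem_ne 𝒜 hl hi.symm
  have hl0 : l = 0 := by
    by_contra h
    have := hproj (Ne.symm h)
    rw [DirectSum.decompose_add, DirectSum.add_apply, AddSubgroup.coe_add,
      DirectSum.decompose_of_mem_ne 𝒜 hj hj0, DirectSum.decompose_of_mem_same 𝒜 hone,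
      zero_add] at this
    exact one_ne_zero this
  rw [hl0] at hl
  exact hc (by simpa using sub_mem hl hone)

/-- The Veronese subring as a `k`-subalgebra. -/
def verSubalgebra (H : AddSubgroup G) : Subalgebra k B where
  __ := verSub 𝒜 H
  algebraMap_mem' c := mem_verSub_of_mem H.zero_mem (algebraMap_mem_zero 𝒜 c)

lemma fg_verSubalgebra [Algebra.FiniteType k B] {H : AddSubgroup G}
    (hH : ∀ g : G, ∃ n ≠ 0, n • g ∈ H) : (verSubalgebra 𝒜 k H).FG := by
  have : Algebra.IsIntegral (verSubalgebra 𝒜 k H) B := isIntegral_verSub hH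
  have : Algebra.FiniteType (verSubalgebra 𝒜 k H) B :=
    Algebra.FiniteType.of_restrictScalars_finiteType k _ _
  have : Module.Finite (verSubalgebra 𝒜 k H) B := Algebra.IsIntegral.finite
  exact (Subalgebra.fg_top _).mp <| fg_of_fg_of_fg k (verSubalgebra 𝒜 k H) B
    Algebra.FiniteType.out Module.Finite.fg_top Subtype.val_injective

end Finiteness

section LocallyNilpotent

section CommRing

variable {R : Type*} [CommRing R] {D : Derivation ℤ R R}

lemma derivation_iterate_eq_zero_of_le {m n : ℕ} {x : R} (h : D^[m] x = 0) (hmn : m ≤ n) :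
    D^[n] x = 0 := by
  rw [← Nat.sub_add_cancel hmn, Function.iterate_add_apply, h, iterate_map_zero]

lemma isLND_iff : IsLND D ↔ ∀ x, ∃ n : ℕ, D^[n] x = 0 :=
  ⟨fun h x => (h x).imp fun _ => And.right, fun h x =>
    (h x).elim fun n hn => ⟨n + 1, n.succ_pos, derivation_iterate_eq_zero_of_le hn n.le_succ⟩⟩

lemma exists_derivation_iterate_add_eq_zero {x y : R} (hx : ∃ n, D^[n] x = 0)
    (hy : ∃ n, D^[n] y = 0) : ∃ n, D^[n] (x + y) = 0 := by
  obtain ⟨m, hm⟩ := hx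
  obtain ⟨n, hn⟩ := hy
  exact ⟨max m n, by rw [iterate_map_add, derivation_iterate_eq_zero_of_le hm (le_max_left m n),
    derivation_iterate_eq_zero_of_le hn (le_max_right m n), add_zero]⟩

lemma derivation_apply_const_mul {a : R} (ha : D a = 0) (x : R) : D (a * x) = a * D x := by
  rw [Derivation.leibniz, ha, smul_zero, add_zero, smul_eq_mul]

lemma derivation_iterate_const_mul {a : R} (ha : D a = 0) (n : ℕ) (x : R) :
    D^[n] (a * x) = a * D^[n] x :=
  Function.Commute.iterate_left (g := (a * ·)) (derivation_apply_const_mul ha) n x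

/-- The extreme term of the Leibniz formula for `D^[m + n] (x * y)`; the others vanish. -/
lemma derivation_iterate_add_mul {m n : ℕ} {x y : R} (hx : D^[m + 1] x = 0)
    (hy : D^[n + 1] y = 0) :
    D^[m + n] (x * y) = ((m + n).choose m : R) * (D^[m] x * D^[n] y) := by
  induction h : m + n generalizing m n x y with
  | zero =>
    obtain ⟨rfl, rfl⟩ := Nat.add_eq_zero_iff.mp h
    simp
  | succ N ih =>
    rcases m with _ | m
    · obtain rfl : n = N + 1 := by lia
      rw [derivation_iterate_const_mul hx, Nat.choose_zero_right, Nat.cast_one, one_mul,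
        Function.iterate_zero_apply]
    rcases n with _ | n
    · obtain rfl : m = N := by lia
      rw [mul_comm x y, derivation_iterate_const_mul hy, Nat.choose_self, Nat.cast_one, one_mul,
        Function.iterate_zero_apply, mul_comm]
    · rw [Function.iterate_succ_apply, Derivation.leibniz, iterate_map_add, smul_eq_mul,
        smul_eq_mul, ih (m := m + 1) (n := n) hx hy (by lia), mul_comm y,
        ih (m := m) (n := n + 1) hx hy (by lia), ← Function.iterate_succ_apply,
        ← Function.iterate_succ_apply, Nat.choose_succ_succ]
      push_cast
      ring

lemma derivation_iterate_pow {s : R} (hs : D (D s) = 0) (n : ℕ) :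
    D^[n] (s ^ n) = (n.factorial : R) * D s ^ n ∧ D^[n + 1] (s ^ n) = 0 := by
  induction n with
  | zero => simp
  | succ n ih =>
    refine (and_iff_left_of_imp fun h => ?_).mpr ?_
    · rw [Function.iterate_succ_apply', h, ← nsmul_eq_mul, map_nsmul, Derivation.leibniz_pow, hs,
        smul_zero, smul_zero, smul_zero]
    · rw [pow_succ, derivation_iterate_add_mul (n := 1) ih.2 hs, ih.1, Nat.choose_succ_self_right,
        Nat.factorial_succ, Function.iterate_one]
      push_cast
      ring

end CommRing

variable {A : Type*} [CommRing A] {D : Derivation ℤ A A} {x y : A} {m n : ℕ}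

variable (D x n) in
/-- `x` has degree `n` with respect to `D`; for locally nilpotent `D` this is the degree function
`deg_D`, made relational so that `0` and elements on which `D` is not nilpotent have no degree. -/
def HasDeg : Prop := D^[n] x ≠ 0 ∧ D^[n + 1] x = 0

namespace HasDeg

lemma unique (hm : HasDeg D x m) (hn : HasDeg D x n) : m = n := by
  rcases lt_trichotomy m n with h | h | h
  · exact absurd (derivation_iterate_eq_zero_of_le hm.2 h) hn.1
  · exact h
  · exact absurd (derivation_iterate_eq_zero_of_le hn.2 h) hm.1

lemma ne_zero (hx : HasDeg D x n) : x ≠ 0 := by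
  rintro rfl
  exact hx.1 (iterate_map_zero D n)

lemma zero_iff : HasDeg D x 0 ↔ x ≠ 0 ∧ D x = 0 := Iff.rfl

lemma apply_iff : HasDeg D (D x) n ↔ HasDeg D x (n + 1) := Iff.rfl

lemma exists_of_iterate_eq_zero (hx : x ≠ 0) (h : D^[n] x = 0) : ∃ m < n, HasDeg D x m := by
  induction n with
  | zero => exact absurd h hx
  | succ n ih =>
    by_cases h' : D^[n] x = 0
    · obtain ⟨m, hm, hxm⟩ := ih h'
      exact ⟨m, hm.trans n.lt_succ_self, hxm⟩
    · exact ⟨n, n.lt_succ_self, h', h⟩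

variable [IsDomain A] [CharZero A]

lemma mul (hx : HasDeg D x m) (hy : HasDeg D y n) : HasDeg D (x * y) (m + n) := by
  have h := derivation_iterate_add_mul hx.2 hy.2
  constructor
  · rw [h]
    exact mul_ne_zero (Nat.cast_ne_zero.mpr (Nat.choose_pos (Nat.le_add_right m n)).ne')
      (mul_ne_zero hx.1 hy.1)
  · rw [Nat.add_right_comm,
      derivation_iterate_add_mul (derivation_iterate_eq_zero_of_le hx.2 (Nat.le_succ _)) hy.2,
      hx.2, zero_mul, mul_zero]

lemma pow (hx : HasDeg D x m) : ∀ n, HasDeg D (x ^ n) (n * m)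
  | 0 => by simp [zero_iff]
  | n + 1 => by
    rw [pow_succ, Nat.succ_mul]
    exact (hx.pow n).mul hx

end HasDeg

namespace IsLND

lemma exists_hasDeg (hD : IsLND D) (hx : x ≠ 0) : ∃ n, HasDeg D x n := by
  obtain ⟨n, -, hn⟩ := hD x
  obtain ⟨m, -, hm⟩ := HasDeg.exists_of_iterate_eq_zero hx hn
  exact ⟨m, hm⟩

lemma exists_iterate_apply_ne_zero (hD : IsLND D) (hx : D x ≠ 0) :
    ∃ n, D (D^[n] x) ≠ 0 ∧ D (D (D^[n] x)) = 0 := by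
  obtain ⟨n, hn⟩ := hD.exists_hasDeg hx
  refine ⟨n, ?_, ?_⟩ <;> simp only [← Function.iterate_succ_apply' D]
  · exact hn.1
  · exact hn.2

variable [IsDomain A] [CharZero A]

lemma apply_eq_zero_of_isUnit (hD : IsLND D) (hx : IsUnit x) : D x = 0 := by
  obtain ⟨y, hxy⟩ := hx.exists_right_inv
  obtain ⟨m, hm⟩ := hD.exists_hasDeg (left_ne_zero_of_mul_eq_one hxy)
  obtain ⟨n, hn⟩ := hD.exists_hasDeg (right_ne_zero_of_mul_eq_one hxy)
  have h1 : HasDeg D (1 : A) 0 := by simp [HasDeg.zero_iff]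
  have hmn : m + n = 0 := HasDeg.unique (hxy ▸ hm.mul hn) h1
  rw [Nat.eq_zero_of_add_eq_zero_right hmn] at hm
  exact hm.2

lemma apply_algebraMap {k : Type*} [Field k] [Algebra k A] (hD : IsLND D) (c : k) :
    D (algebraMap k A c) = 0 := by
  rcases eq_or_ne c 0 with rfl | hc
  · rw [map_zero, map_zero]
  · exact hD.apply_eq_zero_of_isUnit (hc.isUnit.map _)

lemma of_mul_eq_mul (hD : IsLND D) {S : Subring A} {E : Derivation ℤ S S} {u g : A} (hu : u ≠ 0)
    (hg : g ≠ 0) (hDg : D g = 0) (h : ∀ x : S, u * E x = g * D x) : IsLND E := by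
  obtain ⟨l, hl⟩ := hD.exists_hasDeg hu
  have key (n : ℕ) : ∀ x : S, HasDeg D (x : A) n → ∃ N, E^[N] x = 0 := by
    induction n using Nat.strong_induction_on with
    | _ n ih =>
      intro x hx
      by_cases hEx : E x = 0
      · exact ⟨1, hEx⟩
      have hEx' : (E x : A) ≠ 0 := fun h0 => hEx (Subtype.ext h0)
      obtain ⟨m, hm⟩ := hD.exists_hasDeg hEx'
      rcases n with _ | n
      · have h0 := h x
        rw [(HasDeg.zero_iff.mp hx).2, mul_zero] at h0
        exact absurd h0 (mul_ne_zero hu hEx')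
      · have hdeg : l + m = 0 + n := by
          refine HasDeg.unique (hl.mul hm) ?_
          rw [h x]
          exact (HasDeg.zero_iff.mpr ⟨hg, hDg⟩).mul (HasDeg.apply_iff.mpr hx)
        obtain ⟨N, hN⟩ := ih m (by lia) (E x) hm
        exact ⟨N + 1, hN⟩
  refine isLND_iff.mpr fun x => ?_
  rcases eq_or_ne x 0 with rfl | hx
  · exact ⟨0, rfl⟩
  · obtain ⟨n, hn⟩ := hD.exists_hasDeg (x := (x : A)) fun h0 => hx (Subtype.ext h0)
    exact key n x hn

end IsLND

end LocallyNilpotent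

lemma exists_derivation_lift {T M N : Type*} [CommRing T] [AddCommGroup M] [Module T M]
    [AddCommGroup N] [Module T N] (D : Derivation ℤ T M) {ι : N →ₗ[T] M}
    (hι : Function.Injective ι) (h : ∀ x, D x ∈ LinearMap.range ι) :
    ∃ E : Derivation ℤ T N, ∀ x, ι (E x) = D x := by
  choose E hE using h
  refine ⟨Derivation.mk' (AddMonoidHom.toIntLinearMap ⟨⟨E, ?_⟩, ?_⟩) ?_, hE⟩
  · exact hι (by rw [hE, map_zero, map_zero])
  · exact fun x y => hι (by simp only [hE, map_add])
  · exact fun x y => hι (by simp [hE])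

section Homogenization

section Component

variable {G A : Type*} [AddCommGroup G] [DecidableEq G] [CommRing A] (𝒜 : G → AddSubgroup A)
  [GradedRing 𝒜] (D : Derivation ℤ A A) (i : G)

/-- The additive map underlying `derivationComponent`. -/
def derivationComponentHom : A →+ A :=
  (DirectSum.toAddMonoid fun n =>
    ((GradedRing.proj 𝒜 (n + i)).comp (D : A →ₗ[ℤ] A).toAddMonoidHom).comp (𝒜 n).subtype).comp
      (DirectSum.decomposeAddEquiv 𝒜).toAddMonoidHom

lemma derivationComponentHom_of_mem {n : G} {x : A} (hx : x ∈ 𝒜 n) :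
    derivationComponentHom 𝒜 D i x = GradedRing.proj 𝒜 (n + i) (D x) := by
  simp [derivationComponentHom, DirectSum.decompose_of_mem 𝒜 hx]

lemma derivationComponentHom_mul_of_mem {m n : G} {x y : A} (hx : x ∈ 𝒜 m) (hy : y ∈ 𝒜 n) :
    derivationComponentHom 𝒜 D i (x * y) =
      x * derivationComponentHom 𝒜 D i y + y * derivationComponentHom 𝒜 D i x := by
  rw [derivationComponentHom_of_mem 𝒜 D i hx, derivationComponentHom_of_mem 𝒜 D i hy,
    derivationComponentHom_of_mem 𝒜 D i (SetLike.mul_mem_graded hx hy), Derivation.leibniz,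
    map_add, smul_eq_mul, smul_eq_mul]
  congr 1
  · rw [add_assoc]
    exact DirectSum.coe_decompose_mul_add_of_left_mem 𝒜 hx
  · rw [add_comm m n, add_assoc]
    exact DirectSum.coe_decompose_mul_add_of_left_mem 𝒜 hy

/-- The component of degree `i` of a derivation `D` of a graded ring: on the piece of degree `n` it
is `D` followed by the projection to degree `n + i`. -/
def derivationComponent : Derivation ℤ A A :=
  Derivation.mk' (derivationComponentHom 𝒜 D i).toIntLinearMap fun x y => by
    simp only [AddMonoidHom.coe_toIntLinearMap, smul_eq_mul]
    induction x using DirectSum.Decomposition.inductionOn 𝒜 with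
    | zero => simp
    | add x x' hx hx' => rw [add_mul, map_add, map_add, hx, hx']; ring
    | homogeneous x =>
      induction y using DirectSum.Decomposition.inductionOn 𝒜 with
      | zero => simp
      | add y y' hy hy' => rw [mul_add, map_add, map_add, hy, hy']; ring
      | homogeneous y => exact derivationComponentHom_mul_of_mem 𝒜 D i x.2 y.2

variable {𝒜 D i}

lemma derivationComponent_of_mem {n : G} {x : A} (hx : x ∈ 𝒜 n) :
    derivationComponent 𝒜 D i x = GradedRing.proj 𝒜 (n + i) (D x) :=
  derivationComponentHom_of_mem 𝒜 D i hx

lemma isHomogDer_derivationComponent : IsHomogDer 𝒜 (derivationComponent 𝒜 D i) := by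
  refine ⟨i, fun n x hx => ?_⟩
  rw [derivationComponent_of_mem hx]
  exact SetLike.coe_mem _

lemma derivation_eq_zero_of_forall_mem (h : ∀ n, ∀ x ∈ 𝒜 n, D x = 0) : D = 0 := by
  ext x
  induction x using DirectSum.Decomposition.inductionOn 𝒜 with
  | zero => exact map_zero D
  | homogeneous x => exact h _ x x.2
  | add x y hx hy => rw [map_add, hx, hy]; simp

lemma exists_derivationComponent_ne_zero (hD : D ≠ 0) : ∃ i, derivationComponent 𝒜 D i ≠ 0 := by
  by_contra! h
  refine hD (derivation_eq_zero_of_forall_mem (𝒜 := 𝒜) fun n x hx => ?_)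
  classical
  rw [← DirectSum.sum_support_decompose 𝒜 (D x)]
  refine Finset.sum_eq_zero fun j _ => ?_
  have hj := DFunLike.congr_fun (h (j - n)) x
  rwa [derivationComponent_of_mem hx, add_sub_cancel] at hj

lemma proj_derivation_apply [(i : G) → (x : 𝒜 i) → Decidable (x ≠ 0)] (a : G) (x : A) :
    GradedRing.proj 𝒜 a (D x) = ∑ n ∈ (DirectSum.decompose 𝒜 x).support,
      derivationComponent 𝒜 D (a - n) (GradedRing.proj 𝒜 n x) := by
  conv_lhs => rw [← DirectSum.sum_support_decompose 𝒜 x]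
  rw [map_sum, map_sum]
  refine Finset.sum_congr rfl fun n _ => ?_
  rw [GradedRing.proj_apply 𝒜 n x, derivationComponent_of_mem (SetLike.coe_mem _), add_sub_cancel]

variable (𝒜 D) in
lemma finite_derivationComponent_apply_ne_zero (x : A) :
    {i | derivationComponent 𝒜 D i x ≠ 0}.Finite := by
  classical
  have homog {n : G} {y : A} (hy : y ∈ 𝒜 n) : {i | derivationComponent 𝒜 D i y ≠ 0}.Finite := by
    refine ((DirectSum.decompose 𝒜 (D y)).support.finite_toSet.preimage
      (add_right_injective n).injOn).subset fun i hi => ?_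
    rw [Set.mem_ofPred_eq, derivationComponent_of_mem hy] at hi
    exact (GradedRing.mem_support_iff 𝒜 _ _).mpr hi
  induction x using DirectSum.Decomposition.inductionOn 𝒜 with
  | zero => simp
  | homogeneous x => exact homog x.2
  | add x y hx hy =>
    refine (hx.union hy).subset fun i hi => ?_
    by_contra! h
    simp_all

end Component

lemma derivation_eq_zero_of_adjoin_eq_top {k A : Type*} [CommSemiring k] [CommRing A] [Algebra k A]
    {D : Derivation ℤ A A} (hk : ∀ c : k, D (algebraMap k A c) = 0) {t : Set A}
    (ht : Algebra.adjoin k t = ⊤) (h : ∀ x ∈ t, D x = 0) : D = 0 := by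
  let ker : Subalgebra k A := { kerDer D with algebraMap_mem' := hk }
  have hker : Algebra.adjoin k t ≤ ker := Algebra.adjoin_le h
  ext x
  exact hker (ht ▸ Algebra.mem_top : x ∈ Algebra.adjoin k t)

lemma finite_derivationComponent_ne_zero {G k A : Type*} [AddCommGroup G] [DecidableEq G]
    [TwoUniqueSums G] [Field k] [CommRing A] [IsDomain A] [Algebra k A] [Algebra.FiniteType k A]
    (𝒜 : G → AddSubgroup A) [GradedRing 𝒜] {D : Derivation ℤ A A}
    (hk : ∀ c : k, D (algebraMap k A c) = 0) : {i | derivationComponent 𝒜 D i ≠ 0}.Finite := by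
  obtain ⟨t, ht⟩ := Algebra.FiniteType.out (R := k) (A := A)
  refine (t.finite_toSet.biUnion fun x _ =>
    finite_derivationComponent_apply_ne_zero 𝒜 D x).subset fun i hi => ?_
  by_contra hit
  refine hi (derivation_eq_zero_of_adjoin_eq_top (k := k) (fun c => ?_) ht fun x hx => ?_)
  · rw [derivationComponent_of_mem (algebraMap_mem_zero 𝒜 c), hk, map_zero]
  · by_contra h
    exact hit (Set.mem_biUnion hx h)

section LinearOrder

variable {G A : Type*} [AddCommGroup G] [LinearOrder G] [IsOrderedAddMonoid G] [CommRing A]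
  {𝒜 : G → AddSubgroup A} [GradedRing 𝒜] {D : Derivation ℤ A A} {l : G}

lemma proj_derivation_apply_of_le (hl : ∀ i, l < i → derivationComponent 𝒜 D i = 0) {m : G} {y : A}
    (hy : ∀ n, m < n → GradedRing.proj 𝒜 n y = 0) {a : G} (ha : m + l ≤ a) :
    GradedRing.proj 𝒜 a (D y) = derivationComponent 𝒜 D (a - m) (GradedRing.proj 𝒜 m y) := by
  classical
  rw [proj_derivation_apply]
  refine Finset.sum_eq_single m (fun n hn hnm => ?_) (fun hm => ?_)
  · have hlt : n < m := lt_of_le_of_ne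
      (not_lt.mp fun h => (GradedRing.mem_support_iff 𝒜 y n).mp hn (hy n h)) hnm
    rw [hl _ (lt_sub_iff_add_lt'.mpr ((add_lt_add_left hlt l).trans_le ha)), Derivation.zero_apply]
  · rw [not_ne_iff.mp ((GradedRing.mem_support_iff 𝒜 y m).not.mp hm), map_zero]

lemma iterate_derivationComponent (hl : ∀ i, l < i → derivationComponent 𝒜 D i = 0) {n : G} {x : A}
    (hx : x ∈ 𝒜 n) (j : ℕ) : (∀ a, n + j • l < a → GradedRing.proj 𝒜 a (D^[j] x) = 0) ∧
      (derivationComponent 𝒜 D l)^[j] x = GradedRing.proj 𝒜 (n + j • l) (D^[j] x) := by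
  induction j with
  | zero =>
    refine ⟨fun a ha => ?_, ?_⟩
    · rw [zero_smul, add_zero] at ha
      exact DirectSum.decompose_of_mem_ne 𝒜 hx ha.ne
    · rw [zero_smul, add_zero]
      exact (DirectSum.decompose_of_mem_same 𝒜 hx).symm
  | succ j ih =>
    simp only [Function.iterate_succ_apply', succ_nsmul, ← add_assoc]
    refine ⟨fun a ha => ?_, ?_⟩
    · rw [proj_derivation_apply_of_le hl ih.1 ha.le, hl _ (lt_sub_iff_add_lt'.mpr ha),
        Derivation.zero_apply]
    · rw [proj_derivation_apply_of_le hl ih.1 le_rfl, ih.2, add_sub_cancel_left]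

lemma IsLND.derivationComponent_of_isTop (hD : IsLND D)
    (hl : ∀ i, l < i → derivationComponent 𝒜 D i = 0) : IsLND (derivationComponent 𝒜 D l) := by
  refine isLND_iff.mpr fun x => ?_
  induction x using DirectSum.Decomposition.inductionOn 𝒜 with
  | zero => exact ⟨0, rfl⟩
  | homogeneous x =>
    obtain ⟨j, -, hj⟩ := hD (x : A)
    exact ⟨j, by rw [(iterate_derivationComponent hl x.2 j).2, hj, map_zero]⟩
  | add x y hx hy => exact exists_derivation_iterate_add_eq_zero hx hy

lemma IsLND.exists_isHomogDer (k : Type*) [Field k] [IsDomain A] [CharZero A] [Algebra k A]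
    [Algebra.FiniteType k A] (𝒜 : G → AddSubgroup A) [GradedRing 𝒜] (hD : IsLND D) (h0 : D ≠ 0) :
    ∃ E : Derivation ℤ A A, IsLND E ∧ E ≠ 0 ∧ IsHomogDer 𝒜 E := by
  obtain ⟨l, hl, hmax⟩ := Set.exists_max_image _ id
    (finite_derivationComponent_ne_zero (k := k) 𝒜 hD.apply_algebraMap)
    (exists_derivationComponent_ne_zero h0)
  refine ⟨_, hD.derivationComponent_of_isTop fun i hi => ?_, hl, isHomogDer_derivationComponent⟩
  by_contra h
  exact (hmax i h).not_gt hi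

end LinearOrder

end Homogenization

section NonRigid

/-- A ring is non-rigid if it has a nonzero locally nilpotent derivation. -/
def IsNonRigid (R : Type*) [CommRing R] : Prop :=
  ∃ D : Derivation ℤ R R, IsLND D ∧ D ≠ 0

lemma IsNonRigid.of_ringEquiv {R S : Type*} [CommRing R] [CommRing S] (e : R ≃+* S)
    (h : IsNonRigid R) : IsNonRigid S := by
  obtain ⟨D, hD, h0⟩ := h
  let E : Derivation ℤ S S :=
    Derivation.mk' ((e : R →+ S).comp ((D : R →ₗ[ℤ] R).toAddMonoidHom.comp
      (e.symm : S →+ R))).toIntLinearMap fun x y => by simp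
  have hE : ∀ x, E x = e (D (e.symm x)) := fun _ => rfl
  have hsemi : Function.Semiconj e D E := fun x => by rw [hE, e.symm_apply_apply]
  refine ⟨E, isLND_iff.mpr fun x => ?_, fun hE0 => h0 (Derivation.ext fun x => ?_)⟩
  · obtain ⟨n, -, hn⟩ := hD (e.symm x)
    refine ⟨n, ?_⟩
    rw [← e.apply_symm_apply x, ← hsemi.iterate_right n, hn, map_zero]
  · apply e.injective
    rw [hsemi x, hE0, Derivation.zero_apply, Derivation.zero_apply, map_zero]

/-- The replica `(g / u) • D` restricts to a locally nilpotent derivation of any subring that it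
preserves. -/
lemma IsLND.exists_restrict {A : Type*} [CommRing A] [IsDomain A] [CharZero A]
    {D : Derivation ℤ A A} (hD : IsLND D) {T : Subring A} {u g : A} (hu : u ≠ 0) (hg : g ≠ 0)
    (hDg : D g = 0) (h : ∀ x ∈ T, ∃ y ∈ T, u * y = g * D x) :
    ∃ E : Derivation ℤ T T, IsLND E ∧ ∀ x : T, u * E x = g * D x := by
  obtain ⟨E, hE⟩ := exists_derivation_lift ((g • D).compAlgebraMap T)
    (ι := LinearMap.toSpanSingleton T A u) (smul_left_injective T hu) fun x => by
      obtain ⟨y, hyT, hy⟩ := h x x.2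
      exact ⟨⟨y, hyT⟩, (mul_comm y u).trans hy⟩
  have hE' (x : T) : u * E x = g * D x := (mul_comm u _).trans (hE x)
  exact ⟨E, hD.of_mul_eq_mul hu hg hDg hE', hE'⟩

end NonRigid

section Replica

lemma exists_le_of_fg {k A : Type*} [CommSemiring k] [Semiring A] [Algebra k A]
    {S : Subalgebra k A} (hS : S.FG) {Q : ℕ → Subalgebra k A} (hQ : Monotone Q)
    (h : ∀ x ∈ S, ∃ N, x ∈ Q N) : ∃ N, S ≤ Q N := by
  obtain ⟨t, rfl⟩ := hS
  choose! N hN using h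
  refine ⟨t.sup N, Algebra.adjoin_le fun x hx => ?_⟩
  exact hQ (Finset.le_sup hx) (hN x (Algebra.subset_adjoin hx))

lemma exists_dvd_pow_mul_apply_of_fg {k A : Type*} [CommSemiring k] [CommRing A] [Algebra k A]
    {D : Derivation ℤ A A} (hk : ∀ c : k, D (algebraMap k A c) = 0) {S : Subalgebra k A}
    (hS : S.FG) {u a : A} (h : ∀ x ∈ S, ∃ N, u ∣ a ^ N * D x) :
    ∃ N, ∀ x ∈ S, u ∣ a ^ N * D x := by
  let Q (N : ℕ) : Subalgebra k A :=
    { carrier := {x | u ∣ a ^ N * D x}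
      mul_mem' := fun {x y} hx hy => by
        change u ∣ a ^ N * D (x * y)
        rw [Derivation.leibniz, smul_eq_mul, smul_eq_mul, mul_add, mul_left_comm, mul_left_comm _ y]
        exact dvd_add (hy.mul_left x) (hx.mul_left y)
      add_mem' := fun {x y} hx hy => by
        change u ∣ a ^ N * D (x + y)
        rw [map_add, mul_add]
        exact dvd_add hx hy
      algebraMap_mem' := fun c => by
        change u ∣ a ^ N * D (algebraMap k A c)
        rw [hk, mul_zero]
        exact dvd_zero u }
  exact exists_le_of_fg hS (Q := Q)
    (fun M N hMN x hx => dvd_trans hx (mul_dvd_mul_right (pow_dvd_pow a hMN) _)) h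

variable {G A : Type*} [AddCommGroup G] [CommRing A] {𝒜 : G → AddSubgroup A}
  {H : AddSubgroup G} {D : Derivation ℤ A A} {δ : G}

lemma iterate_mem_of_homog (hδ : ∀ i, ∀ x ∈ 𝒜 i, D x ∈ 𝒜 (i + δ)) {i : G} {x : A} (hx : x ∈ 𝒜 i)
    (n : ℕ) : D^[n] x ∈ 𝒜 (i + n • δ) := by
  induction n with
  | zero => simpa using hx
  | succ n ih =>
    rw [Function.iterate_succ_apply', succ_nsmul, ← add_assoc]
    exact hδ _ _ ih

variable [DecidableEq G] [GradedRing 𝒜]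

lemma proj_add_apply_of_homog (hδ : ∀ i, ∀ x ∈ 𝒜 i, D x ∈ 𝒜 (i + δ)) (i : G) (x : A) :
    GradedRing.proj 𝒜 (i + δ) (D x) = D (GradedRing.proj 𝒜 i x) := by
  induction x using DirectSum.Decomposition.inductionOn 𝒜 with
  | zero => simp
  | @homogeneous j x =>
    rcases eq_or_ne j i with rfl | hji
    · rw [GradedRing.proj_apply, GradedRing.proj_apply,
        DirectSum.decompose_of_mem_same 𝒜 (hδ j x x.2), DirectSum.decompose_of_mem_same 𝒜 x.2]
    · rw [GradedRing.proj_apply, GradedRing.proj_apply, DirectSum.decompose_of_mem_ne 𝒜 x.2 hji,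
        DirectSum.decompose_of_mem_ne 𝒜 (hδ j x x.2) fun h => hji (add_right_cancel h), map_zero]
  | add x y hx hy => rw [map_add, map_add, map_add, map_add, hx, hy]

lemma mem_verSub_of_mul_eq_mul_apply [IsDomain A] (hδ : ∀ i, ∀ x ∈ 𝒜 i, D x ∈ 𝒜 (i + δ)) {l γ : G}
    {u g x y : A} (hu : u ∈ 𝒜 l) (hu0 : u ≠ 0) (hg : g ∈ 𝒜 γ) (hγ : γ + δ - l ∈ H)
    (hx : x ∈ verSub 𝒜 H) (h : u * y = g * D x) : y ∈ verSub 𝒜 H := by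
  refine mem_verSub_iff.mpr fun i hi => (mul_eq_zero.mp ?_).resolve_left hu0
  have hmem : i - (γ + δ - l) ∉ H := fun h' => hi (by simpa using H.add_mem h' hγ)
  calc u * GradedRing.proj 𝒜 i y = GradedRing.proj 𝒜 (l + i) (u * y) :=
        (DirectSum.coe_decompose_mul_add_of_left_mem 𝒜 hu).symm
    _ = GradedRing.proj 𝒜 (γ + (i - (γ + δ - l) + δ)) (g * D x) := by
        rw [h]
        congr 2
        abel
    _ = g * GradedRing.proj 𝒜 (i - (γ + δ - l) + δ) (D x) :=
        DirectSum.coe_decompose_mul_add_of_left_mem 𝒜 hg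
    _ = 0 := by
        rw [proj_add_apply_of_homog hδ, mem_verSub_iff.mp hx _ hmem, map_zero, mul_zero]

lemma exists_homog_slice (hD : IsLND D) (hδ : ∀ i, ∀ x ∈ 𝒜 i, D x ∈ 𝒜 (i + δ)) (h0 : D ≠ 0)
    [IsDomain A] {C : ℕ} (hC0 : C ≠ 0) (hC : ∀ g : G, C • g ∈ H) :
    ∃ σ, ∃ s ∈ 𝒜 σ, σ + δ ∈ H ∧ D s ≠ 0 ∧ D (D s) = 0 := by
  obtain ⟨i, x, hx, hDx⟩ : ∃ i, ∃ x ∈ 𝒜 i, D x ≠ 0 := by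
    by_contra! h
    exact h0 (derivation_eq_zero_of_forall_mem h)
  obtain ⟨n, hn, hn'⟩ := hD.exists_iterate_apply_ne_zero hDx
  have hs := iterate_mem_of_homog hδ hx n
  generalize D^[n] x = s at hn hn' hs
  generalize i + n • δ = σ at hs
  have hslice : D (D s ^ (C - 1) * s) = D s ^ C := by
    rw [derivation_apply_const_mul ((kerDer D).pow_mem hn' _), pow_sub_one_mul hC0]
  refine ⟨(C - 1) • (σ + δ) + σ, D s ^ (C - 1) * s,
    SetLike.mul_mem_graded (SetLike.pow_mem_graded _ (hδ σ s hs)) hs, ?_, ?_, ?_⟩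
  · rw [add_assoc, ← succ_nsmul, Nat.sub_add_cancel (Nat.one_le_iff_ne_zero.mpr hC0)]
    exact hC _
  · rw [hslice]
    exact pow_ne_zero _ hn
  · rw [hslice]
    exact (kerDer D).pow_mem hn' C

lemma iterate_pow_mul_sub_eq_zero {s x b : A} {n : ℕ} (hDs : D (D s) = 0) (hDb : D b = 0)
    (hb : b * (n.factorial : A) = D^[n] x) : D^[n] (D s ^ n * x - b * s ^ n) = 0 := by
  rw [iterate_map_sub, derivation_iterate_const_mul ((kerDer D).pow_mem hDs _),
    derivation_iterate_const_mul hDb, (derivation_iterate_pow hDs _).1, ← mul_assoc, hb]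
  ring

/-- Subtracting `(n!)⁻¹ D^[n] x * s ^ n` from `(D s) ^ n * x` lowers the degree of `x`.
By minimality of `m`, this is a multiple of `s ^ m` unless `D^[n] x = 0`. -/
lemma exists_pow_mul_eq_const_add (k : Type*) [Field k] [CharZero k] [Algebra k A] [IsDomain A]
    [TwoUniqueSums G] (hk : ∀ c : k, D (algebraMap k A c) = 0)
    (hδ : ∀ i, ∀ x ∈ 𝒜 i, D x ∈ 𝒜 (i + δ)) {σ : G} {s : A}
    (hs : s ∈ 𝒜 σ) (hσ : σ + δ ∈ H) (hDs : D (D s) = 0) {m : ℕ}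
    (hm : ∀ l, 0 < l → ∀ i, ∀ f ∈ 𝒜 i, f ≠ 0 → D f = 0 → i - l • δ ∈ H → m ≤ l)
    (n : ℕ) {i : G} (hi : i ∈ H) {x : A} (hx : x ∈ 𝒜 i) (hn : D^[n + 1] x = 0) :
    ∃ N c z, D c = 0 ∧ D s ^ N * x = c + s ^ m * z := by
  induction n generalizing i x with
  | zero => exact ⟨0, x, 0, hn, by simp⟩
  | succ n ih =>
    by_cases hr0 : D^[n + 1] x = 0
    · exact ih hi hx hr0
    let b := algebraMap k A ((n + 1).factorial : k)⁻¹ * D^[n + 1] x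
    have hr : D^[n + 1] x ∈ 𝒜 (i + (n + 1) • δ) := iterate_mem_of_homog hδ hx _
    have hDr : D (D^[n + 1] x) = 0 := by rwa [← Function.iterate_succ_apply' D]
    have hmn : m ≤ n + 1 := hm _ n.succ_pos _ _ hr hr0 hDr (by simpa using hi)
    have hb : b ∈ 𝒜 (i + (n + 1) • δ) := by
      have := SetLike.mul_mem_graded (algebraMap_mem_zero 𝒜 ((n + 1).factorial : k)⁻¹) hr
      rwa [zero_add] at this
    have hDb : D b = 0 := by rw [derivation_apply_const_mul (hk _), hDr, mul_zero]
    have hbfac : b * ((n + 1).factorial : A) = D^[n + 1] x := by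
      have hfac : ((n + 1).factorial : k) ≠ 0 := Nat.cast_ne_zero.mpr (Nat.factorial_ne_zero _)
      rw [mul_right_comm, ← map_natCast (algebraMap k A), ← map_mul, inv_mul_cancel₀ hfac, map_one,
        one_mul]
    have hy : D s ^ (n + 1) * x - b * s ^ (n + 1) ∈ 𝒜 (i + (n + 1) • (σ + δ)) := by
      refine sub_mem ?_ ?_
      · rw [add_comm]
        exact SetLike.mul_mem_graded (SetLike.pow_mem_graded _ (hδ σ s hs)) hx
      · rw [add_comm σ, nsmul_add, ← add_assoc]
        exact SetLike.mul_mem_graded hb (SetLike.pow_mem_graded _ hs)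
    obtain ⟨N, c, z, hc, hz⟩ := ih (H.add_mem hi (H.nsmul_mem hσ _)) hy
      (iterate_pow_mul_sub_eq_zero hDs hDb hbfac)
    refine ⟨N + (n + 1), c, z + D s ^ N * b * s ^ (n + 1 - m), hc, ?_⟩
    have hsplit : s ^ (n + 1) = s ^ m * s ^ (n + 1 - m) := (pow_mul_pow_sub s hmn).symm
    rw [pow_add]
    linear_combination hz + D s ^ N * b * hsplit

lemma exists_dvd_pow_mul_apply (k : Type*) [Field k] [CharZero k] [Algebra k A] [IsDomain A]
    [TwoUniqueSums G] (hD : IsLND D) (hδ : ∀ i, ∀ x ∈ 𝒜 i, D x ∈ 𝒜 (i + δ)) {σ : G}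
    {s : A} (hs : s ∈ 𝒜 σ) (hσ : σ + δ ∈ H) (hDs : D (D s) = 0) {m : ℕ}
    (hm : ∀ l, 0 < l → ∀ i, ∀ f ∈ 𝒜 i, f ≠ 0 → D f = 0 → i - l • δ ∈ H → m ≤ l)
    (x : verSub 𝒜 H) : ∃ N, s ^ (m - 1) ∣ D s ^ N * D x := by
  have : CharZero A := charZero_of_injective_algebraMap (algebraMap k A).injective
  induction x using DirectSum.Decomposition.inductionOn (verGrading 𝒜 H) with
  | zero => simp
  | @homogeneous i x =>
    rcases eq_or_ne (x : A) 0 with hx0 | hx0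
    · simp [hx0]
    obtain ⟨n, -, hn⟩ := hD (x : A)
    obtain ⟨N, c, z, hc, hz⟩ := exists_pow_mul_eq_const_add (x := (x : A)) k hD.apply_algebraMap hδ
      hs hσ hDs hm n (mem_of_mem_verSub x.1.2 x.2 hx0) x.2
      (derivation_iterate_eq_zero_of_le hn n.le_succ)
    refine ⟨N, ?_⟩
    rw [← derivation_apply_const_mul ((kerDer D).pow_mem hDs N), hz, map_add, hc, zero_add,
      Derivation.leibniz, Derivation.leibniz_pow]
    simp only [smul_eq_mul, nsmul_eq_mul]
    refine dvd_add ((pow_dvd_pow s m.pred_le).mul_right _) ?_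
    exact ((Dvd.intro _ rfl).mul_left _).mul_left _
  | add x y hx hy =>
    obtain ⟨M, hM⟩ := hx
    obtain ⟨N, hN⟩ := hy
    refine ⟨M + N, ?_⟩
    rw [Subring.coe_add, map_add, mul_add, pow_add]
    refine dvd_add ?_ ?_
    · rw [mul_right_comm]
      exact hM.mul_right _
    · rw [mul_assoc]
      exact hN.mul_left _

lemma degree_replica_mem {G : Type*} [AddCommGroup G] {H : AddSubgroup G} {C m : ℕ} (hC0 : C ≠ 0)
    (hm0 : 0 < m) {ι σ δ : G} (hC : C • ι ∈ H) (hσ : σ + δ ∈ H) (hι : ι - m • δ ∈ H) (N : ℕ) :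
    (C - 1) • ι + N • (σ + δ) + δ - (m - 1) • σ ∈ H := by
  obtain ⟨C, rfl⟩ := Nat.exists_eq_succ_of_ne_zero hC0
  obtain ⟨m, rfl⟩ := Nat.exists_eq_succ_of_ne_zero hm0.ne'
  convert H.sub_mem (H.sub_mem (H.add_mem hC (H.nsmul_mem hσ N)) hι) (H.nsmul_mem hσ m) using 1
  simp only [Nat.succ_sub_one, Nat.succ_eq_add_one, add_smul, one_smul, smul_add]
  abel

/-- With `m ≥ 1` minimal such that some nonzero homogeneous `f ∈ ker D` has `deg f ≡ m • deg D`
modulo `H`, the derivation `f ^ (C - 1) * (D s) ^ N / s ^ (m - 1) • D` has degree in `H` and, for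
`N` large, preserves `B^{(H)}`. -/
lemma isNonRigid_verSub_of_isHomogDer (k : Type*) [Field k] [CharZero k] [Algebra k A]
    [Algebra.FiniteType k A] [IsDomain A] [TwoUniqueSums G] {C : ℕ} (hC0 : C ≠ 0)
    (hC : ∀ g : G, C • g ∈ H) (hD : IsLND D) (h0 : D ≠ 0) (hhom : IsHomogDer 𝒜 D) :
    IsNonRigid (verSub 𝒜 H) := by
  have : CharZero A := charZero_of_injective_algebraMap (algebraMap k A).injective
  classical
  obtain ⟨δ, hδ⟩ := hhom
  obtain ⟨σ, s, hs, hσ, hDs0, hDs⟩ := exists_homog_slice hD hδ h0 hC0 hC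
  have hs0 : s ≠ 0 := by
    rintro rfl
    exact hDs0 (map_zero D)
  have hex : ∃ m, 0 < m ∧ ∃ i, ∃ f ∈ 𝒜 i, f ≠ 0 ∧ D f = 0 ∧ i - m • δ ∈ H :=
    ⟨C, hC0.bot_lt, 0, 1, SetLike.GradedOne.one_mem, one_ne_zero, D.map_one_eq_zero,
      by simpa using hC δ⟩
  obtain ⟨hm0, ι, f, hf, hf0, hDf, hfm⟩ := Nat.find_spec hex
  have hmin : ∀ l, 0 < l → ∀ i, ∀ f ∈ 𝒜 i, f ≠ 0 → D f = 0 → i - l • δ ∈ H → Nat.find hex ≤ l :=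
    fun l hl i f hf hf0 hDf hfl => Nat.find_min' hex ⟨hl, i, f, hf, hf0, hDf, hfl⟩
  generalize Nat.find hex = m at hm0 hfm hmin
  obtain ⟨N, hN⟩ := exists_dvd_pow_mul_apply_of_fg hD.apply_algebraMap
    (fg_verSubalgebra 𝒜 k (H := H) fun g => ⟨C, hC0, hC g⟩)
    fun x hx => exists_dvd_pow_mul_apply k hD hδ hs hσ hDs hmin ⟨x, hx⟩
  let g := f ^ (C - 1) * D s ^ N
  have hg0 : g ≠ 0 := mul_ne_zero (pow_ne_zero _ hf0) (pow_ne_zero _ hDs0)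
  have hDg : D g = 0 := (kerDer D).mul_mem ((kerDer D).pow_mem hDf _) ((kerDer D).pow_mem hDs _)
  obtain ⟨E, hE, hEg⟩ := hD.exists_restrict (T := verSub 𝒜 H) (pow_ne_zero (m - 1) hs0) hg0 hDg
    fun x hx => by
      obtain ⟨z, hz⟩ := hN x hx
      have hy : s ^ (m - 1) * (f ^ (C - 1) * z) = g * D x := by
        rw [mul_left_comm, ← hz, ← mul_assoc]
      exact ⟨_, mem_verSub_of_mul_eq_mul_apply hδ (SetLike.pow_mem_graded _ hs)
        (pow_ne_zero _ hs0) (SetLike.mul_mem_graded (SetLike.pow_mem_graded _ hf)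
          (SetLike.pow_mem_graded _ (hδ σ s hs)))
        (degree_replica_mem hC0 hm0 (hC ι) hσ hfm N) hx hy, hy⟩
  refine ⟨E, hE, ?_⟩
  rintro rfl
  have hsC := hEg ⟨s ^ C, mem_verSub_of_mem (hC σ) (SetLike.pow_mem_graded C hs)⟩
  rw [Derivation.zero_apply, Subring.coe_zero, mul_zero, Derivation.leibniz_pow, smul_eq_mul,
    nsmul_eq_mul] at hsC
  exact mul_ne_zero hg0 (mul_ne_zero (Nat.cast_ne_zero.mpr hC0)
    (mul_ne_zero (pow_ne_zero _ hs0) hDs0)) hsC.symm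

end Replica

section Transitivity

variable {G A : Type*} [AddCommGroup G] [CommRing A] {𝒜 : G → AddSubgroup A}
  {H H' : AddSubgroup G}

lemma map_verSub_verGrading (hle : H' ≤ H) :
    (verSub (verGrading 𝒜 H) H').map (verSub 𝒜 H).subtype = verSub 𝒜 H' := by
  refine (RingHom.map_closure _ _).trans ?_
  rw [Set.image_iUnion₂]
  refine congrArg Subring.closure (Set.iUnion₂_congr fun i hi => ?_)
  refine Set.image_preimage_eq_of_subset fun x hx => ?_
  exact ⟨⟨x, mem_verSub_of_mem (hle hi) hx⟩, rfl⟩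

/-- The Veronese construction is transitive: `(B^{(H)})^{(H')} = B^{(H')}`. -/
def verSubVerGradingEquiv (hle : H' ≤ H) : verSub (verGrading 𝒜 H) H' ≃+* verSub 𝒜 H' :=
  ((verSub (verGrading 𝒜 H) H').equivMapOfInjective _ Subtype.val_injective).trans
    (RingEquiv.subringCongr (map_verSub_verGrading hle))

section

variable [LinearOrder G] [IsOrderedAddMonoid G] [GradedRing 𝒜] [IsDomain A]

section

variable (k : Type*) [Field k] [Algebra k A]

instance : Algebra k (verSub 𝒜 H) :=
  (verSubalgebra 𝒜 k H).algebra

lemma finiteType_verSub [Algebra.FiniteType k A] (hH : ∀ g : G, ∃ n ≠ 0, n • g ∈ H) :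
    Algebra.FiniteType k (verSub 𝒜 H) :=
  ⟨(Subalgebra.fg_top _).mpr (fg_verSubalgebra 𝒜 k hH)⟩

end

lemma IsNonRigid.exists_isHomogDer_verSub [CharZero A] (k : Type*) [Field k] [Algebra k A]
    [Algebra.FiniteType k A] (hH : ∀ g : G, ∃ n ≠ 0, n • g ∈ H)
    (h : IsNonRigid (verSub 𝒜 H)) : ∃ D, IsLND D ∧ D ≠ 0 ∧ IsHomogDer (verGrading 𝒜 H) D := by
  have := finiteType_verSub (𝒜 := 𝒜) k hH
  obtain ⟨D, hD, h0⟩ := h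
  exact hD.exists_isHomogDer k (verGrading 𝒜 H) h0

lemma IsNonRigid.verSub_of_le (k : Type*) [Field k] [CharZero k] [Algebra k A]
    [Algebra.FiniteType k A] {C : ℕ} (hC0 : C ≠ 0) (hC : ∀ g : G, C • g ∈ H')
    (hle : H' ≤ H) (h : IsNonRigid (verSub 𝒜 H)) : IsNonRigid (verSub 𝒜 H') := by
  have : CharZero A := charZero_of_injective_algebraMap (algebraMap k A).injective
  have hH : ∀ g : G, ∃ n ≠ 0, n • g ∈ H := fun g => ⟨C, hC0, hle (hC g)⟩
  have := finiteType_verSub (𝒜 := 𝒜) k hH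
  obtain ⟨D, hD, h0, hhom⟩ := h.exists_isHomogDer_verSub k hH
  exact (isNonRigid_verSub_of_isHomogDer k hC0 hC hD h0 hhom).of_ringEquiv
    (verSubVerGradingEquiv hle)

end

lemma mul_mem_NRset {𝒜 : ℤ → AddSubgroup A} [GradedRing 𝒜] (k : Type*) [Field k] [CharZero k]
    [Algebra k A] [Algebra.FiniteType k A] [IsDomain A] {c d : ℕ} (hc : 1 ≤ c)
    (hd : d ∈ NRset 𝒜) : c * d ∈ NRset 𝒜 := by
  have hpos : 1 ≤ c * d := Nat.mul_pos hc hd.1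
  refine ⟨hpos, IsNonRigid.verSub_of_le k (C := c * d) (Nat.ne_of_gt hpos) (fun g => ?_) ?_ hd.2⟩
  · exact Int.mem_zmultiples_iff.mpr ⟨g, nsmul_eq_mul _ g⟩
  · rw [AddSubgroup.zmultiples_le, Int.mem_zmultiples_iff, Nat.cast_mul]
    exact Dvd.intro_left _ rfl

end Transitivity

section Colon

variable {B : Type*} [CommRing B]

lemma heightOne_of_height_le_one [IsDomain B] {q : Ideal B} (hq : q.IsPrime) (h0 : q ≠ ⊥)
    (h : q.height ≤ 1) : heightOne q := by
  refine ⟨hq, ⟨⊥, Ideal.isPrime_bot, bot_lt_iff_ne_bot.mpr h0⟩, fun p r hp hr hpr hrq => ?_⟩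
  have hpr' := Ideal.height_add_one_le_of_lt_of_isPrime hpr
  have hrq' := Ideal.height_add_one_le_of_lt_of_isPrime hrq
  have : (1 : ℕ∞) + 1 ≤ 1 :=
    (add_le_add_left (le_add_self.trans hpr') 1).trans (hrq'.trans h)
  exact absurd this (by decide)

/-- The fraction `b / z` is integral, since it maps the finitely generated ideal `I` into itself. -/
lemma dvd_of_forall_mul_eq_mul [IsDomain B] [IsIntegrallyClosed B] {I : Ideal B} (hI : I.FG)
    (hI0 : I ≠ ⊥) {z b : B} (hz : z ≠ 0) (h : ∀ c ∈ I, ∃ u ∈ I, c * b = z * u) : z ∣ b := by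
  let K := FractionRing B
  have inj : Function.Injective (algebraMap B K) := IsFractionRing.injective B K
  have hz' : algebraMap B K z ≠ 0 := (map_ne_zero_iff _ inj).mpr hz
  have hint : IsIntegral B (algebraMap B K b / algebraMap B K z) := by
    refine isIntegral_of_smul_mem_submodule (Submodule.map (Algebra.linearMap B K) I) ?_
      (Submodule.FG.map _ hI) _ ?_
    · exact ((Submodule.map_injective_of_injective inj).ne_iff' (Submodule.map_bot _)).mpr hI0
    · rintro _ ⟨c, hc, rfl⟩
      obtain ⟨u, hu, hcu⟩ := h c hc
      refine ⟨u, hu, ?_⟩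
      rw [Algebra.linearMap_apply, Algebra.linearMap_apply, smul_eq_mul, div_mul_eq_mul_div,
        mul_comm, ← map_mul, hcu, map_mul, mul_div_cancel_left₀ _ hz']
  obtain ⟨t, ht⟩ := IsIntegrallyClosed.isIntegral_iff.mp hint
  refine ⟨t, inj ?_⟩
  rw [map_mul, ht, mul_div_cancel₀ _ hz']

lemma mem_colon_span_singleton {z b c : B} : c ∈ (Ideal.span {z}).colon {b} ↔ z ∣ c * b := by
  rw [Submodule.mem_colon_singleton, smul_eq_mul, Ideal.mem_span_singleton]

/-- If `q = (z : b)` and `c * b = z * u` with `c ∈ q` and `u ∉ q`, then `q` is minimal over `c`. -/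
lemma heightOne_colon [IsDomain B] [IsNoetherianRing B] [IsIntegrallyClosed B] {z b : B}
    (hz : z ≠ 0) (hb : ¬ z ∣ b) (hq : ((Ideal.span {z}).colon {b}).IsPrime) :
    heightOne ((Ideal.span {z}).colon {b}) := by
  have hzq : z ∈ (Ideal.span {z}).colon {b} := mem_colon_span_singleton.mpr (dvd_mul_right z b)
  have hne : (Ideal.span {z}).colon {b} ≠ ⊥ := fun h => hz (by rwa [h, Ideal.mem_bot] at hzq)
  obtain ⟨c, hc, hcu⟩ :
      ∃ c ∈ (Ideal.span {z}).colon {b}, ∀ u ∈ (Ideal.span {z}).colon {b}, c * b ≠ z * u := by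
    by_contra! h
    exact hb (dvd_of_forall_mul_eq_mul (IsNoetherian.noetherian _) hne hz h)
  obtain ⟨u, hu⟩ := mem_colon_span_singleton.mp hc
  refine heightOne_of_height_le_one hq hne <|
    Ideal.height_le_one_of_isPrincipal_of_mem_minimalPrimes (Ideal.span {c}) _
      ⟨⟨hq, (Ideal.span_singleton_le_iff_mem _).mpr hc⟩, ?_⟩
  rintro p ⟨hp, hcp⟩ hpq v hv
  obtain ⟨w, hw⟩ := mem_colon_span_singleton.mp hv
  have huv : u * v = c * w := by
    apply mul_left_cancel₀ hz
    linear_combination (-v) * hu + c * hw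
  have huvp : u * v ∈ p := by
    rw [huv]
    exact p.mul_mem_right _ ((Ideal.span_singleton_le_iff_mem _).mp hcp)
  exact (hp.mem_or_mem huvp).resolve_left fun hup => hcu u (hpq hup) hu

lemma isHomogeneous_colon {G : Type*} [AddCommGroup G] [DecidableEq G] {𝒜 : G → AddSubgroup B}
    [GradedRing 𝒜] {z b : B} {i l : G} (hz : z ∈ 𝒜 i) (hb : b ∈ 𝒜 l) :
    ((Ideal.span {z}).colon {b}).IsHomogeneous 𝒜 := by
  intro n c hc
  obtain ⟨t, ht⟩ := mem_colon_span_singleton.mp hc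
  refine mem_colon_span_singleton.mpr ⟨GradedRing.proj 𝒜 (n + l - i) t, ?_⟩
  rw [← DirectSum.coe_decompose_mul_add_of_right_mem 𝒜 hb, ht, GradedRing.proj_apply,
    ← DirectSum.coe_decompose_mul_add_of_left_mem 𝒜 hz, add_sub_cancel]

/-- Take a maximal element among the ideals `(z : a * y)` with `a` homogeneous and `z ∤ a * y`. -/
lemma exists_isPrime_colon_mul {G : Type*} [AddCommGroup G] [LinearOrder G] [IsOrderedAddMonoid G]
    [IsNoetherianRing B] {𝒜 : G → AddSubgroup B} [GradedRing 𝒜] {z y : B} {i j : G}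
    (hz : z ∈ 𝒜 i) (hy : y ∈ 𝒜 j) (hzy : ¬ z ∣ y) :
    ∃ l, ∃ a ∈ 𝒜 l, ¬ z ∣ a * y ∧ ((Ideal.span {z}).colon {a * y}).IsPrime := by
  obtain ⟨q, ⟨l, a, ha, hza, rfl⟩, hmax⟩ := set_has_maximal_iff_noetherian.mpr ‹_›
    {q : Ideal B | ∃ l, ∃ a ∈ 𝒜 l, ¬ z ∣ a * y ∧ (Ideal.span {z}).colon {a * y} = q}
    ⟨_, 0, 1, SetLike.GradedOne.one_mem, by rwa [one_mul], rfl⟩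
  refine ⟨l, a, ha, hza, (isHomogeneous_colon hz
    (SetLike.mul_mem_graded ha hy)).isPrime_of_homogeneous_mem_or_mem ?_ ?_⟩
  · rwa [Ne, Ideal.eq_top_iff_one, mem_colon_span_singleton, one_mul]
  · rintro u v ⟨m, hu⟩ - huv
    refine or_iff_not_imp_left.mpr fun hu' => ?_
    have hle : (Ideal.span {z}).colon {a * y} ≤ (Ideal.span {z}).colon {u * a * y} := by
      intro c hc
      rw [mem_colon_span_singleton] at hc ⊢
      rw [mul_assoc, mul_left_comm]
      exact hc.mul_left u
    have heq := eq_of_le_of_not_lt hle <| hmax _ ⟨m + l, u * a, SetLike.mul_mem_graded hu ha,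
      by rwa [mul_assoc, ← mem_colon_span_singleton], rfl⟩
    rw [mem_colon_span_singleton] at huv
    rw [heq, mem_colon_span_singleton]
    convert huv using 1
    ring

lemma mem_homogHt1_of_isHomogeneous {𝒜 : ℤ → AddSubgroup B} [GradedRing 𝒜] {q : Ideal B}
    (hq : heightOne q) (hhom : q.IsHomogeneous 𝒜) : q ∈ homogHt1 𝒜 := by
  classical
  refine ⟨hq, le_antisymm (fun c hc => ?_) (Ideal.span_le.mpr fun c hc => hc.1)⟩
  rw [← DirectSum.sum_support_decompose 𝒜 c]
  exact sum_mem fun n _ => Ideal.subset_span ⟨hhom n hc, n, SetLike.coe_mem _⟩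

lemma dvd_of_forall_homogHt1 [IsDomain B] [IsNoetherianRing B] [IsIntegrallyClosed B]
    {𝒜 : ℤ → AddSubgroup B} [GradedRing 𝒜] {z y : B} (hz0 : z ≠ 0) {i j : ℤ} (hz : z ∈ 𝒜 i)
    (hy : y ∈ 𝒜 j) (h : ∀ q ∈ homogHt1 𝒜, ∃ w ∉ q, z ∣ w * y) : z ∣ y := by
  by_contra hzy
  obtain ⟨l, a, ha, hza, hprime⟩ := exists_isPrime_colon_mul hz hy hzy
  obtain ⟨w, hw, hwy⟩ := h _ <| mem_homogHt1_of_isHomogeneous (heightOne_colon hz0 hza hprime) <|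
    isHomogeneous_colon hz (SetLike.mul_mem_graded ha hy)
  refine hw (mem_colon_span_singleton.mpr ?_)
  rw [mul_left_comm]
  exact hwy.mul_left a

end Colon

section Extension

lemma exists_derivation_extension {S K : Type*} [CommRing S] [IsDomain S] [CharZero S] [Field K]
    [Algebra S K] [FaithfulSMul S K] [Algebra.IsAlgebraic S K] (D : Derivation ℤ S K) :
    ∃ E : Derivation ℤ K K, ∀ x : S, E (algebraMap S K x) = D x := by
  let F := FractionRing S
  let : Algebra F K := FractionRing.liftAlgebra S K
  have : Algebra.IsAlgebraic F K :=
    (IsFractionRing.comap_isAlgebraic_iff (A := S) (K := F) (C := K)).mp inferInstance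
  have : Algebra.FormallyEtale S F := .of_isLocalization (nonZeroDivisors S)
  have : Algebra.FormallyEtale F K := .of_isSeparable F K
  have : Algebra.FormallyEtale S K := .comp S F K
  let φ : Ω[K⁄ℤ] →ₗ[K] K := D.liftKaehlerDifferential.liftBaseChange K ∘ₗ
    (KaehlerDifferential.tensorKaehlerEquivOfFormallyEtale ℤ S K).symm.toLinearMap
  refine ⟨φ.compDer (KaehlerDifferential.D ℤ K), fun x => ?_⟩
  calc φ (KaehlerDifferential.D ℤ K (algebraMap S K x))
      = D.liftKaehlerDifferential.liftBaseChange K (1 ⊗ₜ KaehlerDifferential.D ℤ S x) :=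
        congrArg _ (KaehlerDifferential.tensorKaehlerEquivOfFormallyEtale_symm_D_algebraMap ℤ S K x)
    _ = D x := by simp

variable {A : Type*} [CommRing A] [IsDomain A] [CharZero A] {D : Derivation ℤ A A}

lemma HasDeg.lt_of_pow {C m n : ℕ} (hC : C ≠ 0) {x : A} (hx : HasDeg D (x ^ C) n)
    (hDx : HasDeg D (D x ^ C) m) : m < n := by
  have hDx0 : D x ≠ 0 := (pow_ne_zero_iff hC).mp hDx.ne_zero
  have hx0 : x ≠ 0 := by
    rintro rfl
    exact hDx0 (map_zero D)
  have hC0 : (C : A) ≠ 0 := Nat.cast_ne_zero.mpr hC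
  have hDpow : D (x ^ C) = C * (x ^ (C - 1) * D x) := by
    rw [Derivation.leibniz_pow, smul_eq_mul, nsmul_eq_mul]
  cases n with
  | zero =>
    exact absurd (hDpow.symm.trans hx.2) (mul_ne_zero hC0 (mul_ne_zero (pow_ne_zero _ hx0) hDx0))
  | succ n =>
    have hleft : HasDeg D (D (x ^ C) ^ C) (C * n) := (HasDeg.apply_iff.mpr hx).pow C
    have hconst : HasDeg D ((C : A) ^ C) 0 :=
      HasDeg.zero_iff.mpr ⟨pow_ne_zero _ hC0, (kerDer D).pow_mem (D.map_natCast C) C⟩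
    have hright := hconst.mul ((hx.pow (C - 1)).mul hDx)
    rw [pow_right_comm, ← mul_pow, ← mul_pow, ← hDpow] at hright
    have hdeg := hleft.unique hright
    obtain ⟨C, rfl⟩ := Nat.exists_eq_succ_of_ne_zero hC
    rw [Nat.succ_sub_one] at hdeg
    linarith

lemma exists_iterate_eq_zero_of_pow {C : ℕ} (hC : C ≠ 0) {P : Set A} (hP : ∀ x ∈ P, D x ∈ P)
    (h : ∀ x ∈ P, ∃ n, D^[n] (x ^ C) = 0) {x : A} (hx : x ∈ P) : ∃ n, D^[n] x = 0 := by
  rcases eq_or_ne x 0 with rfl | hx0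
  · exact ⟨0, rfl⟩
  obtain ⟨m, hm⟩ := h x hx
  obtain ⟨n, -, hn⟩ := HasDeg.exists_of_iterate_eq_zero (pow_ne_zero C hx0) hm
  clear hm hx0
  induction n using Nat.strong_induction_on generalizing x with
  | _ n ih =>
    rcases eq_or_ne (D x) 0 with hDx | hDx
    · exact ⟨1, hDx⟩
    obtain ⟨m, hm⟩ := h _ (hP x hx)
    obtain ⟨l, -, hl⟩ := HasDeg.exists_of_iterate_eq_zero (pow_ne_zero C hDx) hm
    obtain ⟨N, hN⟩ := ih l (hn.lt_of_pow hC hl) (hP x hx) hl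
    exact ⟨N + 1, hN⟩

lemma isLND_of_forall_pow {G : Type*} [AddCommGroup G] [DecidableEq G] {𝒜 : G → AddSubgroup A}
    [GradedRing 𝒜] {δ : G} (hδ : ∀ i, ∀ x ∈ 𝒜 i, D x ∈ 𝒜 (i + δ)) {C : ℕ} (hC : C ≠ 0)
    (h : ∀ i, ∀ x ∈ 𝒜 i, ∃ n, D^[n] (x ^ C) = 0) : IsLND D := by
  refine isLND_iff.mpr fun x => ?_
  induction x using DirectSum.Decomposition.inductionOn 𝒜 with
  | zero => exact ⟨0, rfl⟩
  | @homogeneous i x =>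
    exact exists_iterate_eq_zero_of_pow hC (P := {x | ∃ i, x ∈ 𝒜 i})
      (fun x ⟨i, hx⟩ => ⟨_, hδ i x hx⟩) (fun x ⟨i, hx⟩ => h i x hx) ⟨i, x.2⟩
  | add x y hx hy => exact exists_derivation_iterate_add_eq_zero hx hy

end Extension

section Descent

lemma mem_of_mul_mem {G B : Type*} [AddCommGroup G] [DecidableEq G] [CommRing B] [IsDomain B]
    {𝒜 : G → AddSubgroup B} [GradedRing 𝒜] {u t : B} {i j : G} (hu : u ∈ 𝒜 i) (hu0 : u ≠ 0)
    (h : u * t ∈ 𝒜 (i + j)) : t ∈ 𝒜 j := by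
  have heq : u * GradedRing.proj 𝒜 j t = u * t := by
    rw [GradedRing.proj_apply, ← DirectSum.coe_decompose_mul_add_of_left_mem 𝒜 hu,
      DirectSum.decompose_of_mem_same 𝒜 h]
  rw [← mul_left_cancel₀ hu0 heq]
  exact SetLike.coe_mem _

lemma exists_notMem_of_mem_Mbar {G B : Type*} [AddCommGroup G] [DecidableEq G] [CommRing B]
    {𝒜 : G → AddSubgroup B} [GradedRing 𝒜] {H : AddSubgroup G} {C : ℕ} (hC0 : C ≠ 0)
    (hC : ∀ g : G, C • g ∈ H) {p : Ideal B} (hp : p.IsPrime) {n : G} (hn : n ∈ Mbar 𝒜 p) :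
    ∃ j, ∃ w ∈ 𝒜 j, w ∉ p ∧ j - n ∈ H := by
  induction hn using AddSubgroup.closure_induction with
  | mem i hi =>
    obtain ⟨w, hw, hwp⟩ := Set.not_subset.mp hi
    exact ⟨i, w, hw, hwp, by simp⟩
  | zero => exact ⟨0, 1, SetLike.GradedOne.one_mem, p.one_notMem, by simp⟩
  | add a b _ _ ha hb =>
    obtain ⟨j, w, hw, hwp, hj⟩ := ha
    obtain ⟨j', w', hw', hwp', hj'⟩ := hb
    refine ⟨j + j', w * w', SetLike.mul_mem_graded hw hw', hp.mul_notMem hwp hwp', ?_⟩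
    rw [add_sub_add_comm]
    exact H.add_mem hj hj'
  | neg a _ ha =>
    obtain ⟨j, w, hw, hwp, hj⟩ := ha
    refine ⟨(C - 1) • j, w ^ (C - 1), SetLike.pow_mem_graded _ hw, mt (hp.mem_of_pow_mem _) hwp, ?_⟩
    have hsplit : (C - 1) • j - -a = C • j - (j - a) := by
      obtain ⟨C, rfl⟩ := Nat.exists_eq_succ_of_ne_zero hC0
      rw [Nat.succ_sub_one, succ_nsmul]
      abel
    rw [hsplit]
    exact H.sub_mem (hC j) hj

variable {B : Type*} [CommRing B] {𝒜 : ℤ → AddSubgroup B} [GradedRing 𝒜]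
  {H L : AddSubgroup ℤ} {C : ℕ} {δ : ℤ}

lemma exists_notMem_of_le_Mbar_sup (hC0 : C ≠ 0) (hC : ∀ g : ℤ, C • g ∈ H) {p : Ideal B}
    (hp : p.IsPrime) (hL : L ≤ Mbar 𝒜 p ⊔ H) {n : ℤ} (hn : n ∈ L) :
    ∃ j, ∃ w ∈ 𝒜 j, w ∉ p ∧ j + n ∈ H := by
  obtain ⟨a, ha, b, hb, hab⟩ := AddSubgroup.mem_sup.mp (hL (L.neg_mem hn))
  obtain ⟨j, w, hw, hwp, hj⟩ := exists_notMem_of_mem_Mbar hC0 hC hp ha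
  refine ⟨j, w, hw, hwp, ?_⟩
  convert H.sub_mem hj hb using 1
  linarith

lemma mem_of_derivation_ne_zero {D : Derivation ℤ (verSub 𝒜 H) (verSub 𝒜 H)} (h0 : D ≠ 0)
    (hδ : ∀ i, ∀ x ∈ verGrading 𝒜 H i, D x ∈ verGrading 𝒜 H (i + δ)) : δ ∈ H := by
  obtain ⟨i, x, hx, hDx⟩ : ∃ i, ∃ x ∈ verGrading 𝒜 H i, D x ≠ 0 := by
    by_contra! h
    exact h0 (derivation_eq_zero_of_forall_mem h)
  have hx0 : x ≠ 0 := by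
    rintro rfl
    exact hDx (map_zero D)
  have hi : i ∈ H := mem_of_mem_verSub x.2 hx fun h => hx0 (Subtype.ext h)
  exact (H.add_mem_cancel_left hi).mp <|
    mem_of_mem_verSub (D x).2 (hδ i x hx) fun h => hDx (Subtype.ext h)

lemma exists_derivation_verSub {K : Type*} [CommRing K] [Algebra B K] [FaithfulSMul B K]
    {E : Derivation ℤ K K} (hδ : δ ∈ L)
    (hE : ∀ i ∈ L, ∀ x ∈ 𝒜 i, ∃ y ∈ 𝒜 (i + δ), E (algebraMap B K x) = algebraMap B K y) :
    ∃ F : Derivation ℤ (verSub 𝒜 L) (verSub 𝒜 L),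
      (∀ i, ∀ x ∈ verGrading 𝒜 L i, F x ∈ verGrading 𝒜 L (i + δ)) ∧
      ∀ x : verSub 𝒜 L, algebraMap B K (F x) = E (algebraMap B K x) := by
  have hinj := FaithfulSMul.algebraMap_injective B K
  have hEL : ∀ i, ∀ x ∈ verGrading 𝒜 L i, ∃ y ∈ verGrading 𝒜 L (i + δ),
      algebraMap (verSub 𝒜 L) K y = E (algebraMap (verSub 𝒜 L) K x) := by
    intro i x hx
    rcases eq_or_ne x 0 with rfl | hx0
    · exact ⟨0, zero_mem _, by simp only [map_zero]⟩
    have hi : i ∈ L := mem_of_mem_verSub x.2 hx fun h => hx0 (Subtype.ext h)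
    obtain ⟨y, hy, hxy⟩ := hE i hi x hx
    exact ⟨⟨y, mem_verSub_of_mem (L.add_mem hi hδ) hy⟩, hy, hxy.symm⟩
  have hrange (x : verSub 𝒜 L) :
      E (algebraMap (verSub 𝒜 L) K x) ∈ LinearMap.range (Algebra.linearMap (verSub 𝒜 L) K) := by
    induction x using DirectSum.Decomposition.inductionOn (verGrading 𝒜 L) with
    | zero => simp only [map_zero, zero_mem]
    | @homogeneous i x => exact (hEL i x x.2).imp fun y => And.right
    | add x y hx hy =>
      rw [map_add, map_add]
      exact add_mem hx hy
  obtain ⟨F, hF⟩ := exists_derivation_lift (E.compAlgebraMap (verSub 𝒜 L))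
    (hinj.comp Subtype.val_injective) hrange
  refine ⟨F, fun i x hx => ?_, hF⟩
  obtain ⟨y, hy, hxy⟩ := hEL i x hx
  have hFx : F x = y := Subtype.ext (hinj ((hF x).trans hxy.symm))
  rwa [hFx]

variable [IsDomain B]

section Field

variable {K : Type*} [Field K] [Algebra B K] [IsFractionRing B K] {E : Derivation ℤ K K}

/-- Since `n + deg w ∈ H`, the derivation `E` is integral on `w * x`, and so, on multiplying by
`C • w ^ (C - 1)`, is `x ^ (C - 1) * w ^ C * C * E x = w ^ C * E (x ^ C)`. -/
lemma pow_dvd_of_apply_pow [IsNoetherianRing B] [IsIntegrallyClosed B]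
    (hC0 : C ≠ 0) (hC : ∀ g : ℤ, C • g ∈ H)
    (hE : ∀ i ∈ H, ∀ x ∈ 𝒜 i, ∃ y ∈ 𝒜 (i + δ), E (algebraMap B K x) = algebraMap B K y) {n : ℤ}
    (hw : ∀ q ∈ homogHt1 𝒜, ∃ j, ∃ w ∈ 𝒜 j, w ∉ q ∧ j + n ∈ H) {x y : B} (hx : x ∈ 𝒜 n)
    (hx0 : x ≠ 0) (hy : y ∈ 𝒜 (C • n + δ)) (hxy : E (algebraMap B K (x ^ C)) = algebraMap B K y) :
    x ^ (C - 1) ∣ y := by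
  refine dvd_of_forall_homogHt1 (pow_ne_zero _ hx0) (SetLike.pow_mem_graded _ hx) hy fun q hq => ?_
  obtain ⟨j, w, hwj, hwq, hjn⟩ := hw q hq
  obtain ⟨y₁, -, h₁⟩ := hE _ hjn (w * x) (SetLike.mul_mem_graded hwj hx)
  obtain ⟨y₂, -, h₂⟩ := hE _ (hC j) (w ^ C) (SetLike.pow_mem_graded C hwj)
  refine ⟨w ^ C, mt (hq.1.1.mem_of_pow_mem C) hwq, C * w ^ (C - 1) * y₁ - x * y₂,
    IsFractionRing.injective B K ?_⟩
  rw [← pow_sub_one_mul hC0 w]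
  rw [map_pow, Derivation.leibniz_pow, smul_eq_mul, nsmul_eq_mul] at h₂ hxy
  rw [map_mul, Derivation.leibniz, smul_eq_mul, smul_eq_mul] at h₁
  simp only [map_mul, map_sub, map_pow, map_natCast]
  rw [← hxy, ← h₁, ← h₂]
  ring

lemma exists_apply_algebraMap_eq (k : Type*) [Field k] [CharZero k] [Algebra k B]
    [IsNoetherianRing B] [IsIntegrallyClosed B] (hC0 : C ≠ 0) (hC : ∀ g : ℤ, C • g ∈ H)
    (hE : ∀ i ∈ H, ∀ x ∈ 𝒜 i, ∃ y ∈ 𝒜 (i + δ), E (algebraMap B K x) = algebraMap B K y) {n : ℤ}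
    (hw : ∀ q ∈ homogHt1 𝒜, ∃ j, ∃ w ∈ 𝒜 j, w ∉ q ∧ j + n ∈ H) {x : B} (hx : x ∈ 𝒜 n) :
    ∃ y ∈ 𝒜 (n + δ), E (algebraMap B K x) = algebraMap B K y := by
  rcases eq_or_ne x 0 with rfl | hx0
  · exact ⟨0, zero_mem _, by simp⟩
  obtain ⟨y, hy, hxy⟩ := hE _ (hC n) (x ^ C) (SetLike.pow_mem_graded C hx)
  obtain ⟨t, rfl⟩ := pow_dvd_of_apply_pow hC0 hC hE hw hx hx0 hy hxy
  have ht : t ∈ 𝒜 (n + δ) := by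
    refine mem_of_mul_mem (SetLike.pow_mem_graded (C - 1) hx) (pow_ne_zero _ hx0) ?_
    rwa [← add_assoc, ← succ_nsmul, Nat.sub_add_cancel (Nat.one_le_iff_ne_zero.mpr hC0)]
  have hinj := IsFractionRing.injective B K
  have hCt : C * E (algebraMap B K x) = algebraMap B K t := by
    refine mul_left_cancel₀ (pow_ne_zero (C - 1) ((map_ne_zero_iff _ hinj).mpr hx0)) ?_
    rw [← map_pow, ← map_mul, ← hxy, map_pow, map_pow, Derivation.leibniz_pow, smul_eq_mul,
      nsmul_eq_mul, mul_left_comm]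
  refine ⟨algebraMap k B (C : k)⁻¹ * t, ?_, ?_⟩
  · rw [← zero_add (n + δ)]
    exact SetLike.mul_mem_graded (algebraMap_mem_zero 𝒜 _) ht
  · have hCinv : algebraMap k B (C : k)⁻¹ * (C : B) = 1 := by
      rw [← map_natCast (algebraMap k B), ← map_mul, inv_mul_cancel₀ (Nat.cast_ne_zero.mpr hC0),
        map_one]
    rw [map_mul, ← hCt, ← map_natCast (algebraMap B K), ← mul_assoc, ← map_mul, hCinv, map_one,
      one_mul]

lemma exists_derivation_fractionRing [CharZero B] (hC0 : C ≠ 0) (hC : ∀ g : ℤ, C • g ∈ H)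
    (D : Derivation ℤ (verSub 𝒜 H) (verSub 𝒜 H)) :
    ∃ E : Derivation ℤ K K, ∀ x : verSub 𝒜 H, E (algebraMap B K x) = algebraMap B K (D x) := by
  have : Algebra.IsIntegral (verSub 𝒜 H) B := isIntegral_verSub fun g => ⟨C, hC0, hC g⟩
  have : FaithfulSMul (verSub 𝒜 H) K := (faithfulSMul_iff_algebraMap_injective _ K).mpr <|
    (IsFractionRing.injective B K).comp Subtype.val_injective
  have : Algebra.IsAlgebraic (verSub 𝒜 H) K :=
    (IsFractionRing.isAlgebraic_iff' (verSub 𝒜 H) B K).mp inferInstance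
  exact exists_derivation_extension ((Algebra.linearMap (verSub 𝒜 H) K).compDer D)

end Field

/-- The derivation extends to `Frac B`, which is algebraic over `B^{(H)}`; normality of `B` makes
the extension preserve `B^{(L)}`. -/
lemma exists_homogDer_extension [IsNoetherianRing B] [IsIntegrallyClosed B]
    (k : Type*) [Field k] [CharZero k] [Algebra k B] (hle : H ≤ L) (hC0 : C ≠ 0)
    (hC : ∀ g : ℤ, C • g ∈ H) (hL : ∀ p ∈ homogHt1 𝒜, L ≤ Mbar 𝒜 p ⊔ H)
    {D : Derivation ℤ (verSub 𝒜 H) (verSub 𝒜 H)}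
    (hδ : ∀ i, ∀ x ∈ verGrading 𝒜 H i, D x ∈ verGrading 𝒜 H (i + δ)) (hδH : δ ∈ H) :
    ∃ F : Derivation ℤ (verSub 𝒜 L) (verSub 𝒜 L),
      (∀ i, ∀ x ∈ verGrading 𝒜 L i, F x ∈ verGrading 𝒜 L (i + δ)) ∧
      ∀ (x : verSub 𝒜 H) (y : verSub 𝒜 L), (x : B) = y → ((D x : verSub 𝒜 H) : B) = F y := by
  have : CharZero B := charZero_of_injective_algebraMap (algebraMap k B).injective
  obtain ⟨E, hE⟩ := exists_derivation_fractionRing (K := FractionRing B) hC0 hC D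
  have hEH : ∀ i ∈ H, ∀ x ∈ 𝒜 i, ∃ y ∈ 𝒜 (i + δ),
      E (algebraMap B (FractionRing B) x) = algebraMap B _ y :=
    fun i hi x hx => ⟨_, hδ i ⟨x, mem_verSub_of_mem hi hx⟩ hx, hE ⟨x, mem_verSub_of_mem hi hx⟩⟩
  obtain ⟨F, hFδ, hF⟩ := exists_derivation_verSub (hle hδH) fun n hn x hx =>
    exists_apply_algebraMap_eq k hC0 hC hEH
      (fun q hq => exists_notMem_of_le_Mbar_sup hC0 hC hq.1.1 (hL q hq) hn) hx
  refine ⟨F, hFδ, fun x y hxy => IsFractionRing.injective B (FractionRing B) ?_⟩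
  rw [hF, ← hE, hxy]

theorem IsNonRigid.verSub_of_le_Mbar [IsIntegrallyClosed B] (k : Type*) [Field k]
    [CharZero k] [Algebra k B] [Algebra.FiniteType k B] (hle : H ≤ L) (hC0 : C ≠ 0)
    (hC : ∀ g : ℤ, C • g ∈ H) (hL : ∀ p ∈ homogHt1 𝒜, L ≤ Mbar 𝒜 p ⊔ H)
    (h : IsNonRigid (verSub 𝒜 H)) : IsNonRigid (verSub 𝒜 L) := by
  have : CharZero B := charZero_of_injective_algebraMap (algebraMap k B).injective
  have : IsNoetherianRing B := Algebra.FiniteType.isNoetherianRing k B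
  obtain ⟨D, hD, h0, δ, hδ⟩ := h.exists_isHomogDer_verSub k fun g => ⟨C, hC0, hC g⟩
  obtain ⟨F, hF, hDF⟩ :=
    exists_homogDer_extension k hle hC0 hC hL hδ (mem_of_derivation_ne_zero h0 hδ)
  have hiter (n : ℕ) (x : verSub 𝒜 H) (y : verSub 𝒜 L) (hxy : (x : B) = y) :
      ((D^[n] x : verSub 𝒜 H) : B) = F^[n] y := by
    induction n with
    | zero => exact hxy
    | succ n ih =>
      rw [Function.iterate_succ_apply', Function.iterate_succ_apply']
      exact hDF _ _ ih
  refine ⟨F, isLND_of_forall_pow hF hC0 fun i x hx => ?_, ?_⟩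
  · let y : verSub 𝒜 H := ⟨(x : B) ^ C, mem_verSub_of_mem (hC i) (SetLike.pow_mem_graded C hx)⟩
    obtain ⟨n, -, hn⟩ := hD y
    refine ⟨n, Subtype.ext ?_⟩
    rw [← hiter n y (x ^ C) (SubmonoidClass.coe_pow x C).symm, hn, ZeroMemClass.coe_zero,
      ZeroMemClass.coe_zero]
  · rintro rfl
    refine h0 (Derivation.ext fun x => ?_)
    have hDx := hDF x ⟨x, verSub_mono hle x.2⟩ rfl
    rwa [Derivation.zero_apply, ZeroMemClass.coe_zero, ZeroMemClass.coe_eq_zero] at hDx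

end Descent

section Saturation

lemma zmultiples_groupGen (H : AddSubgroup ℤ) : AddSubgroup.zmultiples (groupGen H : ℤ) = H := by
  ext n
  rw [Int.mem_zmultiples_iff, groupGen, Int.natAbs_dvd,
    ← Submodule.IsPrincipal.mem_iff_generator_dvd]
  rfl

lemma zmultiples_ebarB_le_Mbar {B : Type*} [CommRing B] {𝒜 : ℤ → AddSubgroup B} {p : Ideal B}
    (hp : p ∈ homogHt1 𝒜) : AddSubgroup.zmultiples (ebarB 𝒜 : ℤ) ≤ Mbar 𝒜 p := by
  rw [ebarB, if_pos ⟨p, hp⟩, zmultiples_groupGen]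
  exact iInf_le (fun q : homogHt1 𝒜 => Mbar 𝒜 q.1) ⟨p, hp⟩

theorem gcd_ebarB_mem_NRset (k : Type*) [Field k] [CharZero k] {B : Type*} [CommRing B] [IsDomain B]
    [IsIntegrallyClosed B] [Algebra k B] [Algebra.FiniteType k B]
    {𝒜 : ℤ → AddSubgroup B} [GradedRing 𝒜] {d : ℕ} (hd : d ∈ NRset 𝒜) :
    d.gcd (ebarB 𝒜) ∈ NRset 𝒜 := by
  have hsup := Int.zmultiples_sup d (ebarB 𝒜)
  rw [Int.gcd_natCast_natCast] at hsup
  refine ⟨Nat.gcd_pos_of_pos_left _ hd.1, ?_⟩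
  refine IsNonRigid.verSub_of_le_Mbar k (H := .zmultiples (d : ℤ)) (C := d) ?_ (Nat.ne_of_gt hd.1)
    (fun g => Int.mem_zmultiples_iff.mpr ⟨g, nsmul_eq_mul _ g⟩) (fun p hp => ?_) hd.2
  · exact hsup ▸ le_sup_left
  · rw [← hsup, sup_comm]
    exact sup_le_sup_right (zmultiples_ebarB_le_Mbar hp) _

lemma odiv_dvd (m n : ℕ) : odiv m n ∣ m := by
  unfold odiv
  split_ifs with hn
  · exact one_dvd m
  rcases eq_or_ne m 0 with rfl | hm
  · exact dvd_zero _
  calc ∏ p ∈ m.primeFactors, (if n.factorization p < m.factorization p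
        then p ^ m.factorization p else 1)
      ∣ ∏ p ∈ m.primeFactors, p ^ m.factorization p := Finset.prod_dvd_prod_of_dvd _ _ fun p _ => by
        split_ifs
        · exact dvd_rfl
        · exact one_dvd _
    _ = m := Nat.prod_factorization_pow_eq_self hm

lemma lcm_odiv {m : ℕ} (hm : m ≠ 0) (n : ℕ) : (odiv m n).lcm n = m.lcm n := by
  refine Nat.dvd_antisymm
    (Nat.lcm_dvd ((odiv_dvd m n).trans (Nat.dvd_lcm_left m n)) (Nat.dvd_lcm_right m n))
    (Nat.lcm_dvd ?_ (Nat.dvd_lcm_right _ n))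
  rcases eq_or_ne n 0 with rfl | hn
  · rw [Nat.lcm_zero_right]
    exact dvd_zero m
  refine (Nat.dvd_iff_prime_pow_dvd_dvd _ _).mpr fun p k hp hk => ?_
  rw [hp.pow_dvd_iff_le_factorization hm] at hk
  rcases lt_or_ge (n.factorization p) (m.factorization p) with hlt | hge
  · refine (pow_dvd_pow p hk).trans (dvd_trans ?_ (Nat.dvd_lcm_left _ n))
    have hpm : p ∈ m.primeFactors := by
      rw [← Nat.support_factorization, Finsupp.mem_support_iff]
      exact Nat.ne_zero_of_lt hlt
    rw [odiv, if_neg hn]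
    simpa only [if_pos hlt] using Finset.dvd_prod_of_mem (fun p =>
      if n.factorization p < m.factorization p then p ^ m.factorization p else 1) hpm
  · exact ((hp.pow_dvd_iff_le_factorization hn).mpr (hk.trans hge)).trans (Nat.dvd_lcm_right _ n)

lemma verZ_lcm_eB {B : Type*} [CommRing B] {𝒜 : ℤ → AddSubgroup B} (d : ℕ) :
    verZ 𝒜 (d.lcm (eB 𝒜)) = verZ 𝒜 d := by
  rw [verZ, ← Int.lcm_natCast_natCast, ← Int.zmultiples_inf, eB, zmultiples_groupGen,
    verSub_inf_Gsub, verZ]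

lemma odiv_eB_mem_NRset {B : Type*} [CommRing B] {𝒜 : ℤ → AddSubgroup B} {d : ℕ}
    (hd : d ∈ NRset 𝒜) : odiv d (eB 𝒜) ∈ NRset 𝒜 := by
  refine ⟨Nat.pos_of_dvd_of_pos (odiv_dvd d _) hd.1, ?_⟩
  rw [← verZ_lcm_eB, lcm_odiv (Nat.ne_of_gt hd.1), verZ_lcm_eB]
  exact hd.2

lemma exists_mem_MsetZ_dvd {B : Type*} [CommRing B] {𝒜 : ℤ → AddSubgroup B} {n : ℕ}
    (hn : n ∈ NRset 𝒜) : ∃ d ∈ MsetZ 𝒜, d ∣ n := by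
  induction n using Nat.strong_induction_on with
  | _ n ih =>
    by_cases hM : n ∈ MsetZ 𝒜
    · exact ⟨n, hM, dvd_rfl⟩
    obtain ⟨e, he, hen, hne⟩ : ∃ e ∈ NRset 𝒜, e ∣ n ∧ e ≠ n := by
      by_contra! h
      exact hM ⟨hn, h⟩
    obtain ⟨d, hd, hde⟩ := ih e (lt_of_le_of_ne (Nat.le_of_dvd hn.1 hen) hne) he
    exact ⟨d, hd, hde.trans hen⟩

theorem NRset_eq_biUnion_multiples (k : Type*) [Field k] [CharZero k] {B : Type*} [CommRing B]
    [IsDomain B] [Algebra k B] [Algebra.FiniteType k B] (𝒜 : ℤ → AddSubgroup B)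
    [GradedRing 𝒜] :
    NRset 𝒜 = ⋃ d ∈ MsetZ 𝒜, { m : ℕ | ∃ c : ℕ, 1 ≤ c ∧ m = c * d } := by
  refine Set.Subset.antisymm (fun n hn => ?_) (Set.iUnion₂_subset fun d hd => ?_)
  · obtain ⟨d, hd, c, rfl⟩ := exists_mem_MsetZ_dvd hn
    exact Set.mem_biUnion hd ⟨c, Nat.pos_of_mul_pos_left hn.1, mul_comm d c⟩
  · rintro _ ⟨c, hc, rfl⟩
    exact mul_mem_NRset k hc hd.1

end Saturation

/-- Let k be a field of characteristic 0 and B a ℤ-graded normal affine k-domain.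
Then (a) NR(B) = ⋃_{d ∈ M(B)} {d, 2d, 3d, …}, and (b) every d ∈ M(B) divides ē(B)
and satisfies d ⊘ e(B) = d. -/
theorem NR_is_union_of_multiples
    {k : Type*} [Field k] [CharZero k]
    {B : Type*} [CommRing B] [IsDomain B] [IsIntegrallyClosed B]
    [Algebra k B] [Algebra.FiniteType k B]
    (𝒜 : ℤ → AddSubgroup B) [GradedRing 𝒜] :
    (NRset 𝒜 = ⋃ d ∈ MsetZ 𝒜, { m : ℕ | ∃ c : ℕ, 1 ≤ c ∧ m = c * d }) ∧
    (∀ d ∈ MsetZ 𝒜, d ∣ ebarB 𝒜 ∧ odiv d (eB 𝒜) = d) := by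
  refine ⟨NRset_eq_biUnion_multiples k 𝒜, fun d hd => ⟨?_, ?_⟩⟩
  · exact Nat.gcd_eq_left_iff_dvd.mp (hd.2 _ (gcd_ebarB_mem_NRset k hd.1) (Nat.gcd_dvd_left d _))
  · exact hd.2 _ (odiv_eB_mem_NRset hd.1) (odiv_dvd d _)
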